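/- Let Γ ⊂ ℂ be a quasismooth Jordan curve. There exists α = α(Γ) ≥ 1 such that for every c > 0 there is a constant C > 0 depending only on Γ and c with the following property: for all finite points z₁, z₂, z₃ in the closure of Ω with z₁ ≠ z₂, t_j := Φ(z_j) (j = 1,2,3), if |z₁ − z₂| ≤ c |z₁ − z₃|, then (|t₁ − t₃|/|t₁ − t₂|)^{1/α} ≤ C |z₁ − z₃|/|z₁ − z₂| and |z₁ − z₃|/|z₁ − z₂| ≤ C (|t₁ − t₃|/|t₁ − t₂|)^{α}. -/

import Mathlib

open MeasureTheory Metric Set Filter Bornology Complex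
open scoped ENNReal NNReal Topology

noncomputable section

/-- `Γ` is a Jordan curve: the image of an injective continuous map of the unit circle. -/
def IsJordanCurve (Γ : Set ℂ) : Prop :=
  ∃ γ : ℂ → ℂ, ContinuousOn γ (Metric.sphere (0:ℂ) 1) ∧
    Set.InjOn γ (Metric.sphere (0:ℂ) 1) ∧ Γ = γ '' (Metric.sphere (0:ℂ) 1)

/-- A (closed) subarc of `Γ`: a closed connected subset. -/
def IsSubarc (Γ J : Set ℂ) : Prop :=
  J ⊆ Γ ∧ IsClosed J ∧ IsPreconnected J

/-- `|Γ(z₁,z₂)|`: the length (1-dimensional Hausdorff measure) of the shorter subarc of `Γ`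
joining `z₁` and `z₂`, described as the infimum of lengths of closed connected subsets of `Γ`
containing both points. -/
def shorterArcLength (Γ : Set ℂ) (z₁ z₂ : ℂ) : ℝ≥0∞ :=
  ⨅ (J : Set ℂ) (_ : IsSubarc Γ J ∧ z₁ ∈ J ∧ z₂ ∈ J), μH[1] J

/-- `J` is (a realization of) the shorter arc `Γ(z₁,z₂)` of `Γ` between `z₁` and `z₂`. -/
def IsShorterArc (Γ : Set ℂ) (z₁ z₂ : ℂ) (J : Set ℂ) : Prop :=
  IsSubarc Γ J ∧ z₁ ∈ J ∧ z₂ ∈ J ∧ μH[1] J = shorterArcLength Γ z₁ z₂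

/-- `Γ` is quasismooth (in the sense of Lavrentiev) with constant `Λ ≥ 1`:
`|Γ(z₁,z₂)| ≤ Λ |z₁ - z₂|`. -/
def IsQuasismooth (Γ : Set ℂ) (Λ : ℝ) : Prop :=
  1 ≤ Λ ∧ ∀ z₁ ∈ Γ, ∀ z₂ ∈ Γ,
    shorterArcLength Γ z₁ z₂ ≤ ENNReal.ofReal (Λ * dist z₁ z₂)

/-- The union of the unbounded connected components of `Γᶜ`; for a Jordan curve `Γ` this is
the (unique) unbounded component `Ω` of the complement of `Γ`. -/
def unboundedComponent (Γ : Set ℂ) : Set ℂ :=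
  {z | z ∉ Γ ∧ ¬ Bornology.IsBounded (connectedComponentIn Γᶜ z)}

/-- `d(A,B) := inf {|z-ζ| : z ∈ A, ζ ∈ B}`. -/
def setDist (A B : Set ℂ) : ℝ := sInf (Set.image2 dist A B)

/-- The exterior `𝔻*` of the closed unit disk (finite part). -/
def extDisk : Set ℂ := {w : ℂ | 1 < ‖w‖}

/-- `Φ` is the conformal (holomorphic bijective) map of `Ω` onto `𝔻* = {|w| > 1}` normalized
by `Φ(∞) = ∞` and `Φ'(∞) := lim_{z→∞} Φ(z)/z > 0`. -/
def IsExtConformal (Ω : Set ℂ) (Φ : ℂ → ℂ) : Prop :=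
  DifferentiableOn ℂ Φ Ω ∧ Set.BijOn Φ Ω extDisk ∧
    ∃ c : ℝ, 0 < c ∧
      Filter.Tendsto (fun z => Φ z / z) (Bornology.cobounded ℂ) (nhds (c : ℂ))

/-- `Φ` additionally extends to a homeomorphism of `closure Ω` onto `{|w| ≥ 1}`. -/
def IsExtConformalClosure (Ω : Set ℂ) (Φ : ℂ → ℂ) : Prop :=
  IsExtConformal Ω Φ ∧ ContinuousOn Φ (closure Ω) ∧
    Set.BijOn Φ (closure Ω) {w : ℂ | 1 ≤ ‖w‖}

/-- The level curve `Γ_δ := {ζ ∈ Ω : |Φ(ζ)| = 1 + δ}`. -/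
def levelCurve (Ω : Set ℂ) (Φ : ℂ → ℂ) (δ : ℝ) : Set ℂ :=
  {ζ ∈ Ω | ‖Φ ζ‖ = 1 + δ}

/-- `ρ_δ(z) := d({z}, Γ_δ)`. -/
def rho (Ω : Set ℂ) (Φ : ℂ → ℂ) (δ : ℝ) (z : ℂ) : ℝ :=
  Metric.infDist z (levelCurve Ω Φ δ)

/-- `ν ∈ A∞(Γ)` with constant `lam ≥ 1`: `ν(J) ≤ lam · ν(S)` for every subarc `J ⊂ Γ` and
every Borel set `S ⊂ J` with `|J| ≤ 2|S|`. -/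
def IsAInftyMeasure (Γ : Set ℂ) (ν : MeasureTheory.Measure ℂ) (lam : ℝ) : Prop :=
  1 ≤ lam ∧ ∀ J S : Set ℂ, IsSubarc Γ J → S ⊆ J → MeasurableSet S →
    μH[1] J ≤ 2 * μH[1] S → ν J ≤ ENNReal.ofReal lam * ν S

/-- The logarithmic density `‖d‖ / ‖z‖` restricted to the ring `r₁ < ‖z‖ < r₂`. -/
def ringDensity (r₁ r₂ : ℝ) (z d : ℂ) : ℝ :=
  if ‖z‖ ∈ Ioo r₁ r₂ then ‖d‖ / ‖z‖ else 0

lemma ringDensity_nonneg (r₁ r₂ : ℝ) (z d : ℂ) : 0 ≤ ringDensity r₁ r₂ z d := by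
  unfold ringDensity; split_ifs <;> positivity

/-- A path that crosses a ring has logarithmic length at least `log (r₂ / r₁)`. -/
lemma log_le_lintegral_ringDensity {g g' : ℝ → ℂ} {s s' r₁ r₂ : ℝ} (hr₁ : 0 < r₁) (hr : r₁ < r₂)
    (hd : ∀ x ∈ uIcc s s', HasDerivAt g (g' x) x) (h₁ : ‖g s‖ ≤ r₁) (h₂ : r₂ ≤ ‖g s'‖) :
    ENNReal.ofReal (Real.log (r₂ / r₁)) ≤
      ∫⁻ x in uIcc s s', ENNReal.ofReal (ringDensity r₁ r₂ (g x) (g' x)) := by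
  have hr₂ : 0 < r₂ := hr₁.trans hr
  have hcont : ContinuousOn (fun x => ‖g x‖) (uIcc s s') :=
    fun x hx => (hd x hx).continuousAt.norm.continuousWithinAt
  set A : Set ℝ := uIcc s s' ∩ (fun x => ‖g x‖) ⁻¹' Ioo r₁ r₂ with hA
  have hAm : MeasurableSet A := by
    obtain ⟨u, hu, hu'⟩ := continuousOn_iff'.1 hcont (Ioo r₁ r₂) isOpen_Ioo
    rw [hA, inter_comm, hu']
    exact hu.measurableSet.inter measurableSet_uIcc
  set v : ℝ → ℝ := fun x => Real.log (‖g x‖ ^ 2) / 2 with hv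
  set v' : ℝ → ℝ := fun x => (2 * inner ℝ (g x) (g' x)) / (‖g x‖ ^ 2) / 2 with hv'
  have hvd : ∀ x ∈ A, HasDerivAt v (v' x) x := by
    intro x hx
    have hpos : 0 < ‖g x‖ := hr₁.trans hx.2.1
    exact (((hd x hx.1).norm_sq).log (by positivity)).div_const 2
  have himage : Ioo (Real.log r₁) (Real.log r₂) ⊆ v '' A := by
    intro t ht
    have h1 : r₁ < Real.exp t := (Real.log_lt_iff_lt_exp hr₁).1 ht.1
    have h2 : Real.exp t < r₂ := (Real.lt_log_iff_exp_lt hr₂).1 ht.2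
    have := intermediate_value_uIcc hcont
    obtain ⟨x, hx, hxt⟩ := this (show Real.exp t ∈ uIcc ‖g s‖ ‖g s'‖ from
      Icc_subset_uIcc ⟨h₁.trans h1.le, h2.le.trans h₂⟩)
    refine ⟨x, ⟨hx, ?_⟩, ?_⟩
    · simp only [mem_preimage, hxt]; exact ⟨h1, h2⟩
    · simp only [hv]
      rw [show ‖g x‖ = Real.exp t from hxt, Real.log_pow, Real.log_exp]; norm_num
  calc ENNReal.ofReal (Real.log (r₂ / r₁)) = volume (Ioo (Real.log r₁) (Real.log r₂)) := by
        rw [Real.volume_Ioo, Real.log_div hr₂.ne' hr₁.ne']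
    _ ≤ volume (v '' A) := measure_mono himage
    _ ≤ ∫⁻ x in A, ENNReal.ofReal |((ContinuousLinearMap.toSpanSingleton ℝ (v' x)) : ℝ →L[ℝ] ℝ).det| :=
        addHaar_image_le_lintegral_abs_det_fderiv volume hAm
          (fun x hx => (hvd x hx).hasFDerivAt.hasFDerivWithinAt)
    _ ≤ ∫⁻ x in A, ENNReal.ofReal (ringDensity r₁ r₂ (g x) (g' x)) := by
        refine setLIntegral_mono' hAm fun x hx => ENNReal.ofReal_le_ofReal ?_
        have hpos : 0 < ‖g x‖ := hr₁.trans hx.2.1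
        have hdet : ((ContinuousLinearMap.toSpanSingleton ℝ (v' x)) : ℝ →L[ℝ] ℝ).det = v' x := by
          simp [ContinuousLinearMap.det]
        rw [hdet, ringDensity, if_pos (show ‖g x‖ ∈ Ioo r₁ r₂ from hx.2), hv', abs_le]
        have := abs_le.1 (abs_real_inner_le_norm (g x) (g' x))
        have e : ‖g' x‖ / ‖g x‖ = (2 * (‖g x‖ * ‖g' x‖)) / (‖g x‖ ^ 2) / 2 := by
          field_simp
        rw [e, ← neg_div, ← neg_div]
        have hsq : 0 ≤ ‖g x‖ ^ 2 := by positivity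
        constructor <;> refine div_le_div_of_nonneg_right
          (div_le_div_of_nonneg_right (by linarith) hsq) zero_le_two
    _ ≤ _ := lintegral_mono_set inter_subset_left

lemma det_restrictScalars_toSpanSingleton (c : ℂ) :
    ((ContinuousLinearMap.toSpanSingleton ℂ c).restrictScalars ℝ : ℂ →L[ℝ] ℂ).det = ‖c‖ ^ 2 := by
  simp [ContinuousLinearMap.det, LinearMap.det_restrictScalars,
      Algebra.norm_complex_eq, Complex.normSq_eq_norm_sq]

/-- The logarithmic area of a ring. -/
lemma lintegral_ringDensity_sq {r₁ r₂ : ℝ} (hr₁ : 0 < r₁) (hr : r₁ < r₂) (p : ℂ) :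
    ∫⁻ z : ℂ, ENNReal.ofReal (ringDensity r₁ r₂ (z - p) 1 ^ 2) =
      ENNReal.ofReal (2 * Real.pi * Real.log (r₂ / r₁)) := by
  rw [lintegral_sub_right_eq_self (fun z => ENNReal.ofReal (ringDensity r₁ r₂ z 1 ^ 2)) p,
    ← Complex.lintegral_comp_polarCoord_symm]
  have h1 : ∫⁻ q in polarCoord.target, ENNReal.ofReal q.1 •
      ENNReal.ofReal (ringDensity r₁ r₂ (Complex.polarCoord.symm q) 1 ^ 2) =
      ∫⁻ q in Ioo r₁ r₂ ×ˢ Ioo (-Real.pi) Real.pi, ENNReal.ofReal (1 / q.1) := by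
    rw [← lintegral_indicator polarCoord.open_target.measurableSet,
      ← lintegral_indicator (measurableSet_Ioo.prod measurableSet_Ioo)]
    congr 1
    ext q
    simp only [indicator, polarCoord_target, mem_prod, mem_Ioi, Complex.norm_polarCoord_symm,
      ringDensity, norm_one]
    by_cases hq : 0 < q.1
    · by_cases hq2 : q.2 ∈ Ioo (-Real.pi) Real.pi
      · by_cases hq1 : q.1 ∈ Ioo r₁ r₂
        · simp only [hq, hq2, abs_of_pos hq, hq1, and_self, if_true]
          rw [smul_eq_mul, ← ENNReal.ofReal_mul hq.le]
          congr 1; field_simp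
        · simp [hq, hq2, abs_of_pos hq, hq1]
      · simp [hq2]
    · have : q.1 ∉ Ioo r₁ r₂ := fun h => hq (hr₁.trans h.1)
      simp [hq, this]
  rw [h1, Measure.volume_eq_prod, setLIntegral_prod]
  · simp only [lintegral_const, MeasurableSet.univ, Measure.restrict_apply, univ_inter,
      Real.volume_Ioo]
    rw [lintegral_mul_const' _ _ ENNReal.ofReal_ne_top]
    have hint : IntervalIntegrable (fun x : ℝ => 1 / x) volume r₁ r₂ := by
      refine intervalIntegral.intervalIntegrable_one_div (fun x hx => ?_) continuousOn_id
      rw [uIcc_of_le hr.le] at hx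
      exact (hr₁.trans_le hx.1).ne'
    rw [restrict_Ioo_eq_restrict_Ioc, ← ofReal_integral_eq_lintegral_ofReal,
      ← intervalIntegral.integral_of_le hr.le, integral_one_div_of_pos hr₁ (hr₁.trans hr),
      ← ENNReal.ofReal_mul]
    · congr 1; ring
    · exact Real.log_nonneg ((one_le_div hr₁).2 hr.le)
    · exact (intervalIntegrable_iff_integrableOn_Ioc_of_le hr.le).1 hint
    · filter_upwards [ae_restrict_mem measurableSet_Ioc] with x hx
      have := hr₁.trans hx.1
      simp only [Pi.zero_apply]; positivity
  · exact (Measurable.ennreal_ofReal (by fun_prop)).aemeasurable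

/-- The length-area inequality: if an injective holomorphic function on a rectangle maps every
horizontal segment to a path crossing the ring `r₁ < ‖z - p‖ < r₂`, then the modulus of the
rectangle is controlled by that of the ring. -/
theorem mul_log_le_of_crossing {f : ℂ → ℂ} {x₀ x₁ a b r₁ r₂ : ℝ} {p : ℂ} (hx : x₀ < x₁)
    (hab : a < b) (hr₁ : 0 < r₁) (hr : r₁ < r₂)
    (hd : DifferentiableOn ℂ f (Ioo x₀ x₁ ×ℂ Ioo a b)) (hinj : InjOn f (Ioo x₀ x₁ ×ℂ Ioo a b))
    (hcross : ∀ y ∈ Ioo a b, ∃ s ∈ Icc x₀ x₁, ∃ s' ∈ Icc x₀ x₁,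
      (∀ x ∈ uIcc s s', DifferentiableAt ℂ f (x + y * I)) ∧
        ‖f (s + y * I) - p‖ ≤ r₁ ∧ r₂ ≤ ‖f (s' + y * I) - p‖) :
    (b - a) * Real.log (r₂ / r₁) ≤ 2 * Real.pi * (x₁ - x₀) := by
  set R : Set ℂ := Ioo x₀ x₁ ×ℂ Ioo a b with hR
  have hRo : IsOpen R := isOpen_Ioo.reProdIm isOpen_Ioo
  set ℓ := Real.log (r₂ / r₁) with hℓ
  have hℓpos : 0 < ℓ := Real.log_pos ((one_lt_div hr₁).2 hr)
  set q : ℂ → ℝ := fun w => ringDensity r₁ r₂ (f w - p) (deriv f w) with hq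
  have hq0 : ∀ w, 0 ≤ q w := fun w => ringDensity_nonneg _ _ _ _
  have hfm : AEMeasurable f (volume.restrict R) :=
    hd.continuousOn.aemeasurable hRo.measurableSet
  have hqm : AEMeasurable q (volume.restrict R) := by
    have h1 : Measurable (fun z : ℂ × ℂ => ringDensity r₁ r₂ z.1 z.2) := by
      unfold ringDensity
      refine Measurable.ite ?_ (by fun_prop) measurable_const
      exact measurableSet_Ioo.preimage (by fun_prop)
    exact h1.comp_aemeasurable
      ((hfm.sub_const p).prodMk (measurable_deriv f).aemeasurable)
  -- the area estimate
  have harea : ∫⁻ w in R, ENNReal.ofReal (q w ^ 2) ≤ ENNReal.ofReal (2 * Real.pi * ℓ) := by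
    rw [← lintegral_ringDensity_sq hr₁ hr p]
    have hder : ∀ w ∈ R, HasFDerivWithinAt f
        ((ContinuousLinearMap.toSpanSingleton ℂ (deriv f w)).restrictScalars ℝ : ℂ →L[ℝ] ℂ) R w :=
      fun w hw => ((hd.differentiableAt (hRo.mem_nhds hw)).hasDerivAt.hasFDerivAt.restrictScalars
        ℝ).hasFDerivWithinAt
    have := lintegral_image_eq_lintegral_abs_det_fderiv_mul volume hRo.measurableSet hder hinj
      (fun z => ENNReal.ofReal (ringDensity r₁ r₂ (z - p) 1 ^ 2))
    calc _ = ∫⁻ w in R, ENNReal.ofReal |((ContinuousLinearMap.toSpanSingleton ℂ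
              (deriv f w)).restrictScalars ℝ : ℂ →L[ℝ] ℂ).det| *
              ENNReal.ofReal (ringDensity r₁ r₂ (f w - p) 1 ^ 2) := by
          congr 1; ext w
          rw [det_restrictScalars_toSpanSingleton, ← ENNReal.ofReal_mul (abs_nonneg _)]
          congr 1
          rw [abs_of_nonneg (by positivity), ← mul_pow]
          congr 1
          simp only [hq, ringDensity]
          split_ifs <;> simp [div_eq_mul_inv]
      _ ≤ _ := by rw [← this]; exact setLIntegral_le_lintegral _ _
  have hmp := Complex.volume_preserving_equiv_real_prod.symm
  have hpre : Complex.measurableEquivRealProd.symm ⁻¹' R = Ioo x₀ x₁ ×ˢ Ioo a b := by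
    ext z; simp [hR, Complex.mem_reProdIm]
  have hvol : volume R = ENNReal.ofReal ((x₁ - x₀) * (b - a)) := by
    rw [← hmp.measure_preimage hRo.measurableSet.nullMeasurableSet, hpre,
      Measure.volume_eq_prod, Measure.prod_prod, Real.volume_Ioo, Real.volume_Ioo,
      ENNReal.ofReal_mul (by linarith)]
  -- the length estimate
  have hlen : ENNReal.ofReal ((b - a) * ℓ) ≤ ∫⁻ w in R, ENNReal.ofReal (q w) := by
    have hmp' : MeasurePreserving Complex.measurableEquivRealProd.symm
        (volume.restrict (Ioo x₀ x₁ ×ˢ Ioo a b)) (volume.restrict R) := by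
      rw [← hpre]; exact hmp.restrict_preimage hRo.measurableSet
    rw [← hmp'.lintegral_comp_emb (MeasurableEquiv.measurableEmbedding _), Measure.volume_eq_prod,
      ← Measure.prod_restrict, lintegral_prod_symm]
    · calc ENNReal.ofReal ((b - a) * ℓ) = ∫⁻ _ in Ioo a b, ENNReal.ofReal ℓ := by
            simp only [lintegral_const, MeasurableSet.univ, Measure.restrict_apply, univ_inter,
              Real.volume_Ioo]
            rw [← ENNReal.ofReal_mul hℓpos.le, mul_comm]
        _ ≤ _ := by
            refine setLIntegral_mono' measurableSet_Ioo fun y hy => ?_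
            obtain ⟨s, hs, s', hs', hds, h1, h2⟩ := hcross y hy
            have hpath : ∀ x ∈ uIcc s s', HasDerivAt (fun x : ℝ => f (x + y * I) - p)
                (deriv f (x + y * I)) x := by
              intro x hx
              have h3 : HasDerivAt (fun z : ℂ => f (z + y * I) - p) (deriv f (x + y * I)) (x : ℂ) :=
                ((hds x hx).hasDerivAt.comp_add_const _ _).sub_const p
              exact h3.comp_ofReal
            refine (log_le_lintegral_ringDensity hr₁ hr hpath h1 h2).trans ?_
            rw [Measure.restrict_congr_set Ioo_ae_eq_Icc]
            refine (lintegral_mono_set (uIcc_subset_Icc hs hs')).trans (le_of_eq ?_)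
            congr 1; ext x
            have e : Complex.measurableEquivRealProd.symm (x, y) = x + y * I := by
              apply Complex.ext <;> simp [Complex.measurableEquivRealProd]
            simp only [hq, e]
    · rw [Measure.prod_restrict, ← Measure.volume_eq_prod]
      exact (hqm.comp_quasiMeasurePreserving hmp'.quasiMeasurePreserving).ennreal_ofReal
  -- combine
  set t := ℓ / (x₁ - x₀) with ht
  have hx' : 0 < x₁ - x₀ := by linarith
  have htpos : 0 < t := by positivity
  have hfin : ENNReal.ofReal (2 * t * ((b - a) * ℓ)) ≤
      ENNReal.ofReal (t ^ 2 * ((x₁ - x₀) * (b - a)) + 2 * Real.pi * ℓ) := by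
    have hba : 0 < b - a := by linarith
    calc ENNReal.ofReal (2 * t * ((b - a) * ℓ))
        = ENNReal.ofReal (2 * t) * ENNReal.ofReal ((b - a) * ℓ) := by
          rw [ENNReal.ofReal_mul (by positivity)]
      _ ≤ ENNReal.ofReal (2 * t) * ∫⁻ w in R, ENNReal.ofReal (q w) := by gcongr
      _ = ∫⁻ w in R, ENNReal.ofReal (2 * t * q w) := by
          rw [← lintegral_const_mul' _ _ ENNReal.ofReal_ne_top]
          congr 1; ext w; rw [ENNReal.ofReal_mul (p := 2 * t) (by positivity)]
      _ ≤ ∫⁻ w in R, (ENNReal.ofReal (t ^ 2) + ENNReal.ofReal (q w ^ 2)) := by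
          refine lintegral_mono fun w => ?_
          rw [← ENNReal.ofReal_add (by positivity) (by positivity)]
          exact ENNReal.ofReal_le_ofReal (two_mul_le_add_sq t (q w))
      _ = ENNReal.ofReal (t ^ 2) * volume R + ∫⁻ w in R, ENNReal.ofReal (q w ^ 2) := by
          rw [lintegral_add_left measurable_const]; simp
      _ ≤ _ := by
          rw [hvol, ← ENNReal.ofReal_mul (by positivity), ENNReal.ofReal_add (by positivity)
            (by positivity)]
          gcongr
  rw [ENNReal.ofReal_le_ofReal_iff (by
    have : 0 < b - a := by linarith
    positivity)] at hfin
  have e1 : 2 * t * ((b - a) * ℓ) = 2 * ((b - a) * ℓ * ℓ / (x₁ - x₀)) := by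
    rw [ht]; ring
  have e2 : t ^ 2 * ((x₁ - x₀) * (b - a)) = (b - a) * ℓ * ℓ / (x₁ - x₀) := by
    rw [ht]; field_simp
  rw [e1, e2] at hfin
  have h3 : (b - a) * ℓ * ℓ / (x₁ - x₀) ≤ 2 * Real.pi * ℓ := by linarith
  rw [div_le_iff₀ hx'] at h3
  nlinarith

/-- An absolute constant in the distortion theorems below. -/
def koebeConst : ℝ := Real.exp (4 * Real.pi ^ 2 / Real.log 2)

lemma one_le_koebeConst : 1 ≤ koebeConst := by
  have := Real.log_pos one_lt_two
  exact Real.one_le_exp (by positivity)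

lemma koebeConst_pos : 0 < koebeConst := zero_lt_one.trans_le one_le_koebeConst

lemma exists_sphere_eq_exp {w₀ ζ : ℂ} {t : ℝ} (ht : 0 < t) (hζ : ζ ∈ sphere w₀ t) :
    ∃ x ∈ Icc (0 : ℝ) (2 * Real.pi), w₀ + exp (I * (x + (-Real.log t : ℝ) * I)) = ζ := by
  have h0 : ζ - w₀ ≠ 0 := by
    rw [mem_sphere, dist_eq_norm] at hζ
    rw [← norm_pos_iff, hζ]; exact ht
  refine ⟨toIcoMod Real.two_pi_pos 0 (arg (ζ - w₀)), ?_, ?_⟩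
  · have := toIcoMod_mem_Ico Real.two_pi_pos 0 (arg (ζ - w₀))
    rw [zero_add] at this
    exact Ico_subset_Icc_self this
  · rw [← self_sub_toIcoDiv_zsmul]
    have : I * (((arg (ζ - w₀) - toIcoDiv Real.two_pi_pos 0 (arg (ζ - w₀)) • (2 * Real.pi) : ℝ) : ℂ)
        + (-Real.log t : ℝ) * I) = Real.log t + arg (ζ - w₀) * I
        - (toIcoDiv Real.two_pi_pos 0 (arg (ζ - w₀)) : ℂ) * (2 * Real.pi * I) := by
      push_cast
      linear_combination (-(Real.log t : ℂ)) * I_mul_I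
    rw [mem_sphere, dist_eq_norm] at hζ
    rw [this, Complex.exp_periodic.sub_int_mul_eq, exp_add, ← ofReal_exp, Real.exp_log ht, ← hζ,
      norm_mul_exp_arg_mul_I, add_sub_cancel]

/-- The length-area inequality for concentric circles. -/
lemma le_koebeConst_mul_of_circles {f : ℂ → ℂ} {w₀ p : ℂ} {s t r₁ r₂ : ℝ} (ht : 0 < t)
    (hts : 2 * t ≤ s) (hd : DifferentiableOn ℂ f (ball w₀ s)) (hinj : InjOn f (ball w₀ s))
    (hr₁ : 0 ≤ r₁) (h : ∀ u ∈ Ioo t (2 * t), ∃ ζ₁ ∈ sphere w₀ u, ∃ ζ₂ ∈ sphere w₀ u,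
      ‖f ζ₁ - p‖ ≤ r₁ ∧ r₂ ≤ ‖f ζ₂ - p‖) : r₂ ≤ koebeConst * r₁ := by
  suffices H : ∀ r, 0 < r → r₁ ≤ r → r₂ ≤ koebeConst * r by
    refine le_of_forall_pos_le_add fun ε hε => ?_
    have := H (r₁ + ε / koebeConst) (by have := koebeConst_pos; positivity)
      (by have := koebeConst_pos; have : 0 < ε / koebeConst := by positivity
          linarith)
    rwa [mul_add, mul_div_cancel₀ _ koebeConst_pos.ne'] at this
  intro r hr hr'
  by_contra! hlt
  have hrr : r < r₂ := by nlinarith [one_le_koebeConst]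
  have hl2 := Real.log_pos one_lt_two
  have hmem : ∀ z : ℂ, z.im ∈ Ioo (-Real.log (2 * t)) (-Real.log t) →
      w₀ + exp (I * z) ∈ ball w₀ s := by
    intro z hz
    rw [mem_ball, dist_eq_norm, add_sub_cancel_left, norm_exp]
    refine lt_of_lt_of_le ?_ hts
    rw [← Real.lt_log_iff_exp_lt (by positivity)]
    simp; linarith [hz.1]
  have key := mul_log_le_of_crossing (f := fun z => f (w₀ + exp (I * z))) (x₀ := 0)
    (x₁ := 2 * Real.pi) (a := -Real.log (2 * t)) (b := -Real.log t) (p := p) Real.two_pi_pos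
    (by rw [Real.log_mul two_ne_zero ht.ne']; linarith) hr hrr ?_ ?_ ?_
  · rw [Real.log_mul two_ne_zero ht.ne'] at key
    have h1 : Real.log (r₂ / r) ≤ 4 * Real.pi ^ 2 / Real.log 2 := by
      rw [le_div_iff₀ hl2]; nlinarith
    rw [Real.log_le_iff_le_exp (by have := hr.trans hrr; positivity), div_le_iff₀ hr] at h1
    exact absurd h1 (not_le.2 hlt)
  · intro z hz
    rw [Complex.mem_reProdIm] at hz
    have h1 : DifferentiableAt ℂ f (w₀ + exp (I * z)) :=
      hd.differentiableAt (isOpen_ball.mem_nhds (hmem z hz.2))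
    exact (DifferentiableAt.comp (f := fun z => w₀ + exp (I * z)) z h1
      (by fun_prop)).differentiableWithinAt
  · intro z hz z' hz' hzz
    rw [Complex.mem_reProdIm] at hz hz'
    have h1 := hinj (hmem z hz.2) (hmem z' hz'.2) hzz
    have h2 := add_left_cancel h1
    rw [exp_eq_exp_iff_exists_int] at h2
    obtain ⟨n, hn⟩ := h2
    have h3 : z = z' + n * (2 * Real.pi) := by
      have : I * (z - (z' + n * (2 * Real.pi))) = 0 := by rw [mul_sub, hn]; ring
      simpa [sub_eq_zero] using this
    have h4 : z.re = z'.re + n * (2 * Real.pi) := by rw [h3]; simp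
    have h5 : (n : ℝ) < 1 := by
      have := hz.1.2; have := hz'.1.1; have := Real.two_pi_pos; by_contra!; nlinarith
    have h6 : (-1 : ℝ) < n := by
      have := hz.1.1; have := hz'.1.2; have := Real.two_pi_pos; by_contra!; nlinarith
    have h7 : n = 0 := by
      have h5' : n < 1 := by exact_mod_cast h5
      have h6' : -1 < n := by exact_mod_cast h6
      omega
    rw [h3, h7]; simp
  · intro y hy
    have hu : Real.exp (-y) ∈ Ioo t (2 * t) :=
      ⟨by rw [← Real.log_lt_iff_lt_exp ht]; linarith [hy.2],
       by rw [← Real.lt_log_iff_exp_lt (by positivity)]; linarith [hy.1]⟩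
    obtain ⟨ζ₁, hζ₁, ζ₂, hζ₂, h1, h2⟩ := h _ hu
    obtain ⟨x, hx, hxe⟩ := exists_sphere_eq_exp (Real.exp_pos _) hζ₁
    obtain ⟨x', hx', hxe'⟩ := exists_sphere_eq_exp (Real.exp_pos _) hζ₂
    rw [Real.log_exp, neg_neg] at hxe hxe'
    refine ⟨x, hx, x', hx', fun v _ => ?_, ?_, ?_⟩
    · exact DifferentiableAt.comp (f := fun z => w₀ + exp (I * z)) _
        (hd.differentiableAt (isOpen_ball.mem_nhds (hmem _ (by simpa using hy)))) (by fun_prop)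
    · simp only [hxe]; exact h1.trans hr'
    · simp only [hxe']; exact h2

/-- Koebe-type lower distortion bound. -/
lemma mul_norm_deriv_le_of_le_dist {f : ℂ → ℂ} {w₀ w : ℂ} {s : ℝ} (hs : 0 < s)
    (hd : DifferentiableOn ℂ f (ball w₀ s)) (hinj : InjOn f (insert w (ball w₀ s)))
    (hw : s / 2 ≤ dist w w₀) : s * ‖deriv f w₀‖ ≤ 12 * koebeConst * ‖f w - f w₀‖ := by
  have hinj' : InjOn f (ball w₀ s) := hinj.mono (subset_insert _ _)
  have key := le_koebeConst_mul_of_circles (f := f) (w₀ := w₀) (p := f w₀) (s := s) (t := s / 4)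
    (r₁ := 3 * ‖f w - f w₀‖) (r₂ := s / 4 * ‖deriv f w₀‖) (by positivity) (by linarith) hd hinj'
    (by positivity) fun u hu => ?_
  · linarith
  have hu0 : 0 < u := by linarith [hu.1]
  have hus : closedBall w₀ u ⊆ ball w₀ s := closedBall_subset_ball (by linarith [hu.2])
  have hdc : DiffContOnCl ℂ f (ball w₀ u) := by
    refine DifferentiableOn.diffContOnCl (hd.mono ?_)
    rw [closure_ball _ hu0.ne']; exact hus
  have e1 : ∃ ζ ∈ sphere w₀ u, ‖f ζ - f w₀‖ ≤ 3 * ‖f w - f w₀‖ := by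
    by_contra! hcon
    have hww : w ≠ w₀ := by
      rintro rfl; rw [dist_self] at hw; linarith
    have hpos : 0 < ‖f w - f w₀‖ := by
      rw [norm_pos_iff, sub_ne_zero]
      exact fun h => hww (hinj (mem_insert _ _) (mem_insert_of_mem _ (mem_ball_self hs)) h)
    have hfreq : ∃ᶠ z in 𝓝 w₀, f z ≠ f w₀ := by
      refine Filter.Frequently.filter_mono (Filter.Eventually.frequently ?_)
        (nhdsWithin_le_nhds (s := {w₀}ᶜ))
      filter_upwards [self_mem_nhdsWithin, mem_nhdsWithin_of_mem_nhds (ball_mem_nhds w₀ hs)]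
        with z hz hzb h
      exact hz (hinj' hzb (mem_ball_self hs) h)
    have hsub := hdc.ball_subset_image_closedBall hu0 (fun z hz => (hcon z hz).le) hfreq
    obtain ⟨w', hw', hww'⟩ := hsub (show f w ∈ ball (f w₀) _ by
      rw [mem_ball, dist_eq_norm]; linarith)
    have := hinj (mem_insert_of_mem _ (hus hw')) (mem_insert _ _) hww'
    rw [this, mem_closedBall] at hw'
    linarith [hu.2]
  have e2 : ∃ ζ ∈ sphere w₀ u, s / 4 * ‖deriv f w₀‖ ≤ ‖f ζ - f w₀‖ := by
    by_contra! hcon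
    have h1 : ‖deriv (fun z => f z - f w₀) w₀‖ ≤ s / 4 * ‖deriv f w₀‖ / u :=
      norm_deriv_le_of_forall_mem_sphere_norm_le hu0 (hdc.sub_const _) fun z hz => (hcon z hz).le
    rw [deriv_sub_const, le_div_iff₀ hu0] at h1
    obtain ⟨ζ, hζ⟩ := (NormedSpace.sphere_nonempty (x := w₀) (r := u)).2 hu0.le
    have h2 : 0 < s / 4 * ‖deriv f w₀‖ := (norm_nonneg _).trans_lt (hcon ζ hζ)
    have h3 : 0 < ‖deriv f w₀‖ := pos_of_mul_pos_right h2 (by linarith)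
    nlinarith [hu.1]
  obtain ⟨ζ₁, hζ₁, h1⟩ := e1
  obtain ⟨ζ₂, hζ₂, h2⟩ := e2
  exact ⟨ζ₁, hζ₁, ζ₂, hζ₂, h1, h2⟩

/-- Koebe-type upper distortion bound. -/
lemma norm_sub_le_mul_norm_deriv {f : ℂ → ℂ} {w₀ w : ℂ} {s : ℝ} (hs : 0 < s)
    (hd : DifferentiableOn ℂ f (ball w₀ s)) (hinj : InjOn f (ball w₀ s)) (h0 : deriv f w₀ ≠ 0)
    (hw : dist w w₀ ≤ s / 2) : ‖f w - f w₀‖ ≤ koebeConst * (s * ‖deriv f w₀‖) := by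
  refine le_koebeConst_mul_of_circles (f := f) (w₀ := w₀) (p := f w₀) (s := s) (t := s / 2)
    (by positivity) (by linarith) hd hinj (by positivity) fun u hu => ?_
  have hu0 : 0 < u := by linarith [hu.1]
  have hus : closedBall w₀ u ⊆ ball w₀ s := closedBall_subset_ball (by linarith [hu.2])
  have hdc : DiffContOnCl ℂ f (ball w₀ u) := by
    refine DifferentiableOn.diffContOnCl (hd.mono ?_)
    rw [closure_ball _ hu0.ne']; exact hus
  have hfr : frontier (ball w₀ u) = sphere w₀ u := frontier_ball _ hu0.ne'
  have e2 : ∃ ζ ∈ sphere w₀ u, ‖f w - f w₀‖ ≤ ‖f ζ - f w₀‖ := by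
    obtain ⟨ζ, hζ, hmax⟩ := exists_mem_frontier_isMaxOn_norm isBounded_ball ⟨w₀, mem_ball_self hu0⟩
      (hdc.sub_const (f w₀))
    rw [hfr] at hζ
    exact ⟨ζ, hζ, hmax (subset_closure (by rw [mem_ball]; linarith [hu.1]))⟩
  have e1 : ∃ ζ ∈ sphere w₀ u, ‖f ζ - f w₀‖ ≤ s * ‖deriv f w₀‖ := by
    by_contra! hcon
    have hslope : DifferentiableOn ℂ (dslope f w₀) (ball w₀ s) :=
      (differentiableOn_dslope (ball_mem_nhds w₀ hs)).2 hd
    have hne : ∀ z ∈ ball w₀ s, dslope f w₀ z ≠ 0 := by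
      intro z hz
      by_cases hzw : z = w₀
      · rwa [hzw, dslope_same]
      · rw [dslope_of_ne _ hzw, slope_def_field]
        exact div_ne_zero (sub_ne_zero.2 fun h => hzw (hinj hz (mem_ball_self hs) h))
          (sub_ne_zero.2 hzw)
    have hdc' : DiffContOnCl ℂ (fun z => (dslope f w₀ z)⁻¹) (ball w₀ u) := by
      refine DifferentiableOn.diffContOnCl ?_
      rw [closure_ball _ hu0.ne']
      exact (hslope.mono hus).inv fun z hz => hne z (hus hz)
    have hL : 0 < ‖deriv f w₀‖ := norm_pos_iff.2 h0
    have h1 := norm_le_of_forall_mem_frontier_norm_le isBounded_ball hdc'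
      (C := u / (s * ‖deriv f w₀‖)) (fun z hz => ?_) (subset_closure (mem_ball_self hu0))
    · rw [dslope_same, norm_inv, inv_eq_one_div, div_le_div_iff₀ hL (by positivity)] at h1
      nlinarith [hu.2]
    · rw [hfr] at hz
      have hzw : z ≠ w₀ := by
        rintro rfl; simp at hz; linarith
      have := hcon z hz
      rw [dslope_of_ne _ hzw, slope_def_field, norm_inv, norm_div, inv_div]
      rw [mem_sphere, dist_eq_norm] at hz
      rw [hz]
      gcongr
  obtain ⟨ζ₁, hζ₁, h1⟩ := e1
  obtain ⟨ζ₂, hζ₂, h2⟩ := e2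
  exact ⟨ζ₁, hζ₁, ζ₂, hζ₂, h1, h2⟩

/-- The constant in the Harnack-type inequality for derivatives of injective functions. -/
def harnackConst : ℝ := 12 * koebeConst ^ 2

lemma one_le_harnackConst : 1 ≤ harnackConst := by
  have := one_le_koebeConst
  unfold harnackConst; nlinarith

lemma harnackConst_pos : 0 < harnackConst := zero_lt_one.trans_le one_le_harnackConst

/-- The derivatives of an injective holomorphic function at nearby points are comparable. -/
lemma norm_deriv_le_harnackConst_mul {f : ℂ → ℂ} {w w' : ℂ} {s : ℝ}
    (hd : DifferentiableOn ℂ f (ball w s)) (hinj : InjOn f (ball w s))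
    (hd' : DifferentiableOn ℂ f (ball w' s)) (hinj' : InjOn f (ball w' s))
    (h0 : deriv f w ≠ 0) (hww : dist w w' ≤ s / 2) :
    ‖deriv f w'‖ ≤ harnackConst * ‖deriv f w‖ := by
  rcases eq_or_ne w w' with rfl | hne
  · exact le_mul_of_one_le_left (norm_nonneg _) one_le_harnackConst
  have hpos : 0 < dist w w' := dist_pos.2 hne
  set r := 2 * dist w w' with hr
  have hr0 : 0 < r := by positivity
  have hrs : r ≤ s := by linarith
  have hsub := ball_subset_ball (x := w) hrs
  have hsub' := ball_subset_ball (x := w') hrs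
  have h1 := mul_norm_deriv_le_of_le_dist (f := f) (w₀ := w') (w := w) hr0 (hd'.mono hsub')
    (hinj'.mono (insert_subset (by rw [mem_ball]; linarith) hsub')) (by linarith)
  have h2 := norm_sub_le_mul_norm_deriv (f := f) (w₀ := w) (w := w') hr0 (hd.mono hsub)
    (hinj.mono hsub) h0 (by rw [dist_comm]; linarith)
  rw [norm_sub_rev] at h1
  have h3 : r * ‖deriv f w'‖ ≤ r * (harnackConst * ‖deriv f w‖) := by
    unfold harnackConst
    nlinarith [koebeConst_pos]
  exact le_of_mul_le_mul_left h3 hr0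

lemma norm_deriv_le_harnackConst_pow_mul {f : ℂ → ℂ} {s : ℝ} {U : Set ℂ} (hU : Convex ℝ U)
    (hd : ∀ v ∈ U, DifferentiableOn ℂ f (ball v s)) (hinj : ∀ v ∈ U, InjOn f (ball v s))
    (h0 : ∀ v ∈ U, deriv f v ≠ 0) (n : ℕ) {w w' : ℂ} (hw : w ∈ U) (hw' : w' ∈ U)
    (hww : dist w w' ≤ n * (s / 2)) : ‖deriv f w'‖ ≤ harnackConst ^ n * ‖deriv f w‖ := by
  induction n generalizing w' with
  | zero =>
    have : w = w' := dist_le_zero.1 (by simpa using hww)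
    simp [this]
  | succ n ih =>
    set v : ℂ := AffineMap.lineMap w w' ((n : ℝ) / (n + 1)) with hv
    have hn : (0 : ℝ) < n + 1 := by positivity
    have hvU : v ∈ U := hU.lineMap_mem hw hw' ⟨by positivity, by rw [div_le_one hn]; linarith⟩
    have h1 : dist w v ≤ n * (s / 2) := by
      rw [hv, dist_left_lineMap, Real.norm_of_nonneg (by positivity)]
      push_cast at hww
      rw [div_mul_eq_mul_div, div_le_iff₀ hn]
      nlinarith [(Nat.cast_nonneg n : (0 : ℝ) ≤ n)]
    have h2 : dist v w' ≤ s / 2 := by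
      rw [hv, dist_lineMap_right, show 1 - (n : ℝ) / (n + 1) = 1 / (n + 1) by field_simp; ring,
        Real.norm_of_nonneg (by positivity)]
      push_cast at hww
      rw [div_mul_eq_mul_div, div_le_iff₀ hn]
      linarith
    have h3 := norm_deriv_le_harnackConst_mul (hd v hvU) (hinj v hvU) (hd w' hw') (hinj w' hw')
      (h0 v hvU) h2
    calc ‖deriv f w'‖ ≤ harnackConst * ‖deriv f v‖ := h3
      _ ≤ harnackConst * (harnackConst ^ n * ‖deriv f w‖) :=
          mul_le_mul_of_nonneg_left (ih hvU h1) harnackConst_pos.le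
      _ = _ := by ring

lemma norm_sub_le_harnackConst_pow_mul {f : ℂ → ℂ} {s : ℝ} (hs : 0 < s) {U : Set ℂ}
    (hU : Convex ℝ U)
    (hd : ∀ v ∈ U, DifferentiableOn ℂ f (ball v s)) (hinj : ∀ v ∈ U, InjOn f (ball v s))
    (h0 : ∀ v ∈ U, deriv f v ≠ 0) (n : ℕ) {w w' : ℂ} (hw : w ∈ U) (hw' : w' ∈ U)
    (hww : dist w w' ≤ n * (s / 2)) :
    ‖f w' - f w‖ ≤ harnackConst ^ n * ‖deriv f w‖ * dist w w' := by
  rw [dist_comm, dist_eq_norm]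
  have hseg : segment ℝ w w' ⊆ U := hU.segment_subset hw hw'
  refine (convex_segment w w').norm_image_sub_le_of_norm_deriv_le
    (fun x hx => (hd x (hseg hx)).differentiableAt (ball_mem_nhds x hs)) (fun x hx => ?_)
    (left_mem_segment ℝ w w') (right_mem_segment ℝ w w')
  refine norm_deriv_le_harnackConst_pow_mul hU hd hinj h0 n hw (hseg hx) (le_trans ?_ hww)
  rw [segment_eq_image_lineMap] at hx
  obtain ⟨θ, hθ, rfl⟩ := hx
  rw [dist_left_lineMap, Real.norm_of_nonneg hθ.1]
  exact mul_le_of_le_one_left dist_nonneg hθ.2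

/-- The properties of the inverse `Ψ` of an exterior conformal map used below. -/
structure IsExtParam (Ψ : ℂ → ℂ) : Prop where
  differentiableOn : DifferentiableOn ℂ Ψ extDisk
  deriv_ne_zero : ∀ t ∈ extDisk, deriv Ψ t ≠ 0
  injOn : InjOn Ψ {t : ℂ | 1 ≤ ‖t‖}
  continuousOn : ContinuousOn Ψ {t : ℂ | 1 ≤ ‖t‖}
  growth : ∃ B > 0, ∀ t : ℂ, 1 ≤ ‖t‖ → ‖Ψ t‖ ≤ B * ‖t‖
  lower : ∀ r : ℝ, 1 < r → ∃ m > 0, ∀ t : ℂ, r ≤ ‖t‖ → m ≤ ‖deriv Ψ t‖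

/-- Bounded turning of the boundary parametrization `Ψ`. -/
def HasBoundedTurning (Ψ : ℂ → ℂ) (M : ℝ) : Prop :=
  1 ≤ M ∧ ∀ y₁ y₂ y : ℝ, y₁ < y₂ → y₂ ≤ y₁ + Real.pi → y ∈ Icc y₁ y₂ →
    ‖Ψ (exp (y * I)) - Ψ (exp (y₁ * I))‖ ≤ M * ‖Ψ (exp (y₁ * I)) - Ψ (exp (y₂ * I))‖

lemma isOpen_extDisk : IsOpen extDisk := isOpen_lt continuous_const continuous_norm

lemma exp_mem_extDisk {w : ℂ} (hw : 0 < w.re) : exp w ∈ extDisk := by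
  simp only [extDisk, mem_ofPred_eq, norm_exp]
  exact Real.one_lt_exp_iff.2 hw

lemma one_le_norm_exp {w : ℂ} (hw : 0 ≤ w.re) : 1 ≤ ‖exp w‖ := by
  rw [norm_exp]; exact Real.one_le_exp hw

lemma eq_of_exp_eq_of_abs_im_lt {w w' : ℂ} (h : exp w = exp w')
    (him : |w.im - w'.im| < 2 * Real.pi) : w = w' := by
  obtain ⟨n, hn⟩ := exp_eq_exp_iff_exists_int.1 h
  have h1 : w.im - w'.im = n * (2 * Real.pi) := by rw [hn]; simp
  rw [h1, abs_mul, abs_of_pos Real.two_pi_pos] at him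
  have h2 : |(n : ℝ)| < 1 := by
    by_contra! h
    nlinarith [Real.two_pi_pos]
  have h3 : n = 0 := by
    have : |n| < 1 := by exact_mod_cast h2
    exact Int.abs_lt_one_iff.1 this
  rw [hn, h3]; simp

lemma convex_le_re (s : ℝ) : Convex ℝ {w : ℂ | s ≤ w.re} := convex_halfSpace_re_ge s

namespace IsExtParam

variable {Ψ : ℂ → ℂ} (h : IsExtParam Ψ)
include h

lemma differentiableAt {t : ℂ} (ht : t ∈ extDisk) : DifferentiableAt ℂ Ψ t :=
  h.differentiableOn.differentiableAt (isOpen_extDisk.mem_nhds ht)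

lemma hasDerivAt_exp {w : ℂ} (hw : 0 < w.re) :
    HasDerivAt (fun w => Ψ (exp w)) (deriv Ψ (exp w) * exp w) w :=
  (h.differentiableAt (exp_mem_extDisk hw)).hasDerivAt.comp w (Complex.hasDerivAt_exp w)

lemma norm_deriv_exp {w : ℂ} (hw : 0 < w.re) :
    ‖deriv (fun w => Ψ (exp w)) w‖ = ‖deriv Ψ (exp w)‖ * Real.exp w.re := by
  rw [(h.hasDerivAt_exp hw).deriv, norm_mul, norm_exp]

lemma deriv_exp_ne_zero {w : ℂ} (hw : 0 < w.re) : deriv (fun w => Ψ (exp w)) w ≠ 0 := by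
  rw [(h.hasDerivAt_exp hw).deriv]
  exact mul_ne_zero (h.deriv_ne_zero _ (exp_mem_extDisk hw)) (exp_ne_zero _)

lemma continuousOn_exp : ContinuousOn (fun w => Ψ (exp w)) {w : ℂ | 0 ≤ w.re} :=
  h.continuousOn.comp Complex.continuous_exp.continuousOn fun _ hw => one_le_norm_exp hw

lemma exp_inj {w w' : ℂ} (hw : 0 ≤ w.re) (hw' : 0 ≤ w'.re) (him : |w.im - w'.im| < 2 * Real.pi)
    (heq : Ψ (exp w) = Ψ (exp w')) : w = w' :=
  eq_of_exp_eq_of_abs_im_lt (h.injOn (one_le_norm_exp hw) (one_le_norm_exp hw') heq) him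

lemma differentiableOn_exp_ball {v : ℂ} {s : ℝ} (hv : s ≤ v.re) :
    DifferentiableOn ℂ (fun w => Ψ (exp w)) (ball v s) := fun w hw => by
  have h1 := (Complex.abs_re_le_norm (w - v)).trans_lt (by rwa [mem_ball, dist_eq_norm] at hw)
  rw [sub_re, abs_lt] at h1
  exact (h.hasDerivAt_exp (by linarith)).differentiableAt.differentiableWithinAt

lemma injOn_exp_ball {v : ℂ} {s : ℝ} (hv : s ≤ v.re) (hs : s ≤ Real.pi) :
    InjOn (fun w => Ψ (exp w)) (ball v s) := fun w hw w' hw' heq => by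
  rw [mem_ball, dist_eq_norm] at hw hw'
  have h1 := abs_lt.1 ((Complex.abs_re_le_norm (w - v)).trans_lt hw)
  have h2 := abs_lt.1 ((Complex.abs_re_le_norm (w' - v)).trans_lt hw')
  have h3 := abs_lt.1 ((Complex.abs_im_le_norm (w - v)).trans_lt hw)
  have h4 := abs_lt.1 ((Complex.abs_im_le_norm (w' - v)).trans_lt hw')
  simp only [sub_re, sub_im] at h1 h2 h3 h4
  refine h.exp_inj (by linarith) (by linarith) ?_ heq
  rw [abs_lt]; constructor <;> linarith

lemma norm_deriv_exp_le {s : ℝ} (hs : 0 < s) (hs' : s ≤ Real.pi) (n : ℕ) {w w' : ℂ}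
    (hw : s ≤ w.re) (hw' : s ≤ w'.re) (hww : dist w w' ≤ n * (s / 2)) :
    ‖deriv (fun w => Ψ (exp w)) w'‖ ≤ harnackConst ^ n * ‖deriv (fun w => Ψ (exp w)) w‖ :=
  norm_deriv_le_harnackConst_pow_mul (convex_le_re s)
    (fun _ hv => h.differentiableOn_exp_ball hv) (fun _ hv => h.injOn_exp_ball hv hs')
    (fun _ hv => h.deriv_exp_ne_zero (hs.trans_le hv)) n hw hw' hww

lemma norm_exp_sub_le {s : ℝ} (hs : 0 < s) (hs' : s ≤ Real.pi) (n : ℕ) {w w' : ℂ}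
    (hw : s ≤ w.re) (hw' : s ≤ w'.re) (hww : dist w w' ≤ n * (s / 2)) :
    ‖Ψ (exp w') - Ψ (exp w)‖ ≤
      harnackConst ^ n * ‖deriv (fun w => Ψ (exp w)) w‖ * dist w w' :=
  norm_sub_le_harnackConst_pow_mul hs (convex_le_re s)
    (fun _ hv => h.differentiableOn_exp_ball hv) (fun _ hv => h.injOn_exp_ball hv hs')
    (fun _ hv => h.deriv_exp_ne_zero (hs.trans_le hv)) n hw hw' hww

/-- The length-area inequality in the logarithmic strip: on a rectangle which is not too thin, some
horizontal segment is mapped into a disk of controlled size. -/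
lemma exists_segment_lt {l a b r : ℝ} {p : ℂ} (hl : 0 < l) (hab : l ≤ b - a)
    (hπ : b - a ≤ Real.pi) (hr : 0 < r)
    (hend : ∀ y ∈ Ioo a b, ∃ x ∈ Ioc 0 l, ‖Ψ (exp (x + y * I)) - p‖ ≤ r) :
    ∃ y ∈ Ioo a b, ∀ x ∈ Icc 0 l, ‖Ψ (exp (x + y * I)) - p‖ ≤ Real.exp 7 * r := by
  suffices H : ∃ y ∈ Ioo a b, ∀ x ∈ Ioc 0 l, ‖Ψ (exp (x + y * I)) - p‖ ≤ Real.exp 7 * r by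
    obtain ⟨y, hy, hxy⟩ := H
    refine ⟨y, hy, ?_⟩
    have hc : ContinuousOn (fun x : ℝ => ‖Ψ (exp (x + y * I)) - p‖) (Icc 0 l) := by
      refine ((h.continuousOn_exp.comp (f := fun x : ℝ => (x + y * I : ℂ)) (by fun_prop)
        fun x hx => ?_).sub continuousOn_const).norm
      simpa using hx.1
    have hcl := hc.preimage_isClosed_of_isClosed isClosed_Icc (isClosed_Iic (a := Real.exp 7 * r))
    have hsub := hcl.closure_subset_iff.2 fun x (hx : x ∈ Ioc 0 l) =>
      ⟨Ioc_subset_Icc_self hx, hxy x hx⟩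
    rw [closure_Ioc hl.ne] at hsub
    exact fun x hx => (hsub hx).2
  by_contra! hcon
  have he : 1 < Real.exp 7 := Real.one_lt_exp_iff.2 (by norm_num)
  have key := mul_log_le_of_crossing (f := fun w => Ψ (exp w)) (x₀ := 0) (x₁ := l) (a := a) (b := b)
    (r₁ := r) (r₂ := Real.exp 7 * r) (p := p) hl (by linarith) hr (by nlinarith) ?_ ?_ ?_
  · rw [mul_div_cancel_right₀ _ hr.ne', Real.log_exp] at key
    nlinarith [Real.pi_lt_d2]
  · intro w hw
    rw [mem_reProdIm] at hw
    exact (h.hasDerivAt_exp hw.1.1).differentiableAt.differentiableWithinAt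
  · intro w hw w' hw' heq
    rw [mem_reProdIm] at hw hw'
    refine h.exp_inj hw.1.1.le hw'.1.1.le ?_ heq
    rw [abs_lt]
    constructor <;> linarith [hw.2.1, hw.2.2, hw'.2.1, hw'.2.2, Real.pi_pos]
  · intro y hy
    obtain ⟨x, hx, h1⟩ := hend y hy
    obtain ⟨x', hx', h2⟩ := hcon y hy
    refine ⟨x, ⟨hx.1.le, hx.2⟩, x', ⟨hx'.1.le, hx'.2⟩, fun u hu => ?_, h1, h2.le⟩
    have : 0 < u := (lt_min hx.1 hx'.1).trans_le hu.1
    exact (h.hasDerivAt_exp (by simpa using this)).differentiableAt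

lemma norm_exp_sub_le_of_mem_rect {M : ℝ} (hM : HasBoundedTurning Ψ M) {l θ : ℝ} (hl : 0 < l)
    (hl' : l ≤ 1 / 2) {w : ℂ} (hw : w.re ∈ Icc 0 l) (hwθ : w.im ∈ Icc (θ - l) (θ + l)) :
    ‖Ψ (exp w) - Ψ (exp (l + θ * I))‖ ≤ (1 + 2 * M) * Real.exp 7 * (2 * harnackConst ^ 4) *
      (l * ‖deriv (fun w => Ψ (exp w)) (l + θ * I)‖) := by
  set L := ‖deriv (fun w => Ψ (exp w)) (l + θ * I)‖ with hL
  set p := Ψ (exp (l + θ * I)) with hp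
  have hLpos : 0 < L := norm_pos_iff.2 (h.deriv_exp_ne_zero (by simpa using hl))
  have hA := harnackConst_pos
  have hπ := Real.pi_gt_three
  set r := 2 * harnackConst ^ 4 * (l * L) with hr
  have hr0 : 0 < r := by positivity
  have he : 1 < Real.exp 7 := Real.one_lt_exp_iff.2 (by norm_num)
  have hM1 := hM.1
  have hright : ∀ y : ℝ, |y - θ| ≤ 2 * l → ‖Ψ (exp (l + y * I)) - p‖ ≤ r := by
    intro y hy
    have hdist : dist (l + θ * I : ℂ) (l + y * I) = |y - θ| := by
      rw [dist_comm, dist_eq_norm, add_sub_add_left_eq_sub, ← sub_mul, norm_mul, norm_I, mul_one,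
        ← ofReal_sub, norm_real, Real.norm_eq_abs]
    have := h.norm_exp_sub_le hl (by linarith) 4 (w := l + θ * I) (w' := l + y * I) (by simp)
      (by simp) (by rw [hdist]; push_cast; linarith)
    refine this.trans ?_
    rw [hdist, hr]
    have : 0 ≤ harnackConst ^ 4 * L := by positivity
    nlinarith
  obtain ⟨y₂, hy₂, h2⟩ := h.exists_segment_lt (a := θ + l) (b := θ + 2 * l) (p := p) hl
    (by linarith) (by linarith) hr0 fun y hy => ⟨l, ⟨hl, le_rfl⟩, hright y (by
      rw [abs_le]; constructor <;> linarith [hy.1, hy.2])⟩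
  obtain ⟨y₁, hy₁, h1⟩ := h.exists_segment_lt (a := θ - 2 * l) (b := θ - l) (p := p) hl
    (by linarith) (by linarith) hr0 fun y hy => ⟨l, ⟨hl, le_rfl⟩, hright y (by
      rw [abs_le]; constructor <;> linarith [hy.1, hy.2])⟩
  set R := (1 + 2 * M) * Real.exp 7 * r with hR
  have hleR : Real.exp 7 * r ≤ R := by
    rw [hR]; have : 0 < Real.exp 7 * r := by positivity
    nlinarith
  have hrR : r ≤ R := by nlinarith
  have h12 : y₁ < y₂ := by linarith [hy₁.2, hy₂.1]
  have hleft : ∀ y ∈ Icc y₁ y₂, ‖Ψ (exp (y * I)) - p‖ ≤ R := by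
    intro y hy
    have e1 := h1 0 ⟨le_rfl, hl.le⟩
    have e2 := h2 0 ⟨le_rfl, hl.le⟩
    simp only [ofReal_zero, zero_add] at e1 e2
    have e3 := hM.2 y₁ y₂ y h12 (by linarith [hy₁.1, hy₂.2]) hy
    have e4 : ‖Ψ (exp (y₁ * I)) - Ψ (exp (y₂ * I))‖ ≤ 2 * (Real.exp 7 * r) := by
      calc _ = ‖(Ψ (exp (y₁ * I)) - p) - (Ψ (exp (y₂ * I)) - p)‖ := by congr 1; ring
        _ ≤ _ := (norm_sub_le _ _).trans (by linarith)
    calc ‖Ψ (exp (y * I)) - p‖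
        = ‖(Ψ (exp (y * I)) - Ψ (exp (y₁ * I))) + (Ψ (exp (y₁ * I)) - p)‖ := by congr 1; ring
      _ ≤ ‖Ψ (exp (y * I)) - Ψ (exp (y₁ * I))‖ + ‖Ψ (exp (y₁ * I)) - p‖ := norm_add_le _ _
      _ ≤ M * (2 * (Real.exp 7 * r)) + Real.exp 7 * r := by
          gcongr; exact e3.trans (by gcongr)
      _ = R := by rw [hR]; ring
  have hbd : IsBounded (Ioo 0 l ×ℂ Ioo y₁ y₂) := (isBounded_Ioo _ _).reProdIm (isBounded_Ioo _ _)
  have hcl : closure (Ioo 0 l ×ℂ Ioo y₁ y₂) = Icc 0 l ×ℂ Icc y₁ y₂ := by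
    rw [closure_reProdIm, closure_Ioo hl.ne, closure_Ioo h12.ne]
  have hdc : DiffContOnCl ℂ (fun w => Ψ (exp w) - p) (Ioo 0 l ×ℂ Ioo y₁ y₂) := by
    refine DiffContOnCl.sub_const ⟨fun v hv => ?_, ?_⟩ p
    · exact (h.hasDerivAt_exp hv.1.1).differentiableAt.differentiableWithinAt
    · rw [hcl]
      exact h.continuousOn_exp.mono fun v hv => hv.1.1
  have key := norm_le_of_forall_mem_frontier_norm_le hbd hdc (C := R) ?_ (z := w) ?_
  · refine key.trans (le_of_eq ?_)
    rw [hR, hr]; ring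
  · intro z hz
    have hzz : (z.re + z.im * I : ℂ) = z := re_add_im z
    rw [frontier_reProdIm, closure_Ioo hl.ne, closure_Ioo h12.ne, frontier_Ioo hl,
      frontier_Ioo h12] at hz
    rcases hz with ⟨hz1, hz2⟩ | ⟨hz1, hz2⟩
    · rcases hz2 with hz2 | hz2
      · have := h1 z.re hz1
        rw [← hz2, hzz] at this
        exact this.trans hleR
      · have := h2 z.re hz1
        rw [mem_singleton_iff] at hz2
        rw [← hz2, hzz] at this
        exact this.trans hleR
    · rcases hz1 with hz1 | hz1
      · have := hleft z.im hz2
        rw [mem_preimage, mem_Icc] at hz2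
        have e : (z.im * I : ℂ) = z := by
          rw [← hzz]; simp [hz1]
        rwa [e] at this
      · rw [mem_singleton_iff] at hz1
        have := hright z.im (by
          rw [abs_le]; constructor <;> linarith [hz2.1, hz2.2, hy₁.1, hy₂.2])
        rw [← hz1, hzz] at this
        exact this.trans hrR
  · rw [hcl]
    exact ⟨hw, by linarith [hwθ.1, hy₁.2], by linarith [hwθ.2, hy₂.1]⟩

end IsExtParam

lemma norm_inv_norm_smul_sub_le {t τ : ℂ} (ht : t ≠ 0) (hτ : 1 ≤ ‖τ‖) :
    ‖t / ‖t‖ - τ / ‖τ‖‖ ≤ 2 * ‖t - τ‖ := by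
  have h1 : (‖t‖ : ℂ) ≠ 0 := by simpa using ht
  have h2 : (‖τ‖ : ℂ) ≠ 0 := by rw [ofReal_ne_zero]; linarith
  have h3 : ‖t‖ ≠ 0 := by simpa using ht
  have e : (‖τ‖ : ℂ) * (t / ‖t‖ - τ / ‖τ‖) = (t - τ) + (t / ‖t‖) * ((‖τ‖ - ‖t‖ : ℝ) : ℂ) := by
    push_cast; field_simp; ring
  have h4 : ‖τ‖ * ‖t / ‖t‖ - τ / ‖τ‖‖ ≤ 2 * ‖t - τ‖ := by
    calc ‖τ‖ * ‖t / ‖t‖ - τ / ‖τ‖‖ = ‖(‖τ‖ : ℂ) * (t / ‖t‖ - τ / ‖τ‖)‖ := by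
          rw [norm_mul, norm_real, norm_norm]
      _ ≤ ‖t - τ‖ + ‖(t / ‖t‖) * ((‖τ‖ - ‖t‖ : ℝ) : ℂ)‖ := by rw [e]; exact norm_add_le _ _
      _ = ‖t - τ‖ + |‖τ‖ - ‖t‖| := by
          rw [norm_mul, norm_div, norm_real, norm_norm, div_self h3, one_mul, norm_real,
            Real.norm_eq_abs]
      _ ≤ 2 * ‖t - τ‖ := by
          have := abs_norm_sub_norm_le τ t
          rw [norm_sub_rev] at this; linarith
  nlinarith [norm_nonneg (t / ‖t‖ - τ / ‖τ‖)]

/-- Logarithms of two points outside the unit disk with comparable arguments. -/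
lemma exists_exp_eq_exp_eq {t τ : ℂ} (ht : 1 ≤ ‖t‖) (hτ : 1 ≤ ‖τ‖) :
    ∃ φ θ : ℝ, exp (Real.log ‖t‖ + φ * I) = t ∧ exp (Real.log ‖τ‖ + θ * I) = τ ∧
      |φ - θ| ≤ 4 * ‖t - τ‖ ∧ |φ - θ| ≤ Real.pi := by
  have ht0 : t ≠ 0 := norm_pos_iff.1 (by linarith)
  have hτ0 : τ ≠ 0 := norm_pos_iff.1 (by linarith)
  have h1 : (‖t‖ : ℂ) ≠ 0 := by simpa using ht0
  have h2 : (‖τ‖ : ℂ) ≠ 0 := by simpa using hτ0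
  have hexp : ∀ z : ℂ, z ≠ 0 → exp (Real.log ‖z‖ + arg z * I) = z := fun z hz => by
    rw [exp_add, ← ofReal_exp, Real.exp_log (norm_pos_iff.2 hz), norm_mul_exp_arg_mul_I]
  refine ⟨arg τ + arg (t / τ), arg τ, ?_, hexp τ hτ0, ?_, ?_⟩
  · have e : (Real.log ‖t‖ + (arg τ + arg (t / τ) : ℝ) * I : ℂ) =
        (Real.log ‖τ‖ + arg τ * I) + (Real.log ‖t / τ‖ + arg (t / τ) * I) := by
      rw [norm_div, Real.log_div (by linarith) (by linarith)]; push_cast; ring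
    rw [e, exp_add, hexp τ hτ0, hexp _ (div_ne_zero ht0 hτ0), mul_div_cancel₀ _ hτ0]
  · rw [add_sub_cancel_left]
    have e : t / τ = (‖t‖ / ‖τ‖ : ℝ) * ((t / ‖t‖) / (τ / ‖τ‖)) := by
      push_cast; field_simp
    have hpos : 0 < ‖t‖ / ‖τ‖ := div_pos (by linarith) (by linarith)
    rw [e, arg_real_mul _ hpos, ← angle_eq_abs_arg (div_ne_zero ht0 h1) (div_ne_zero hτ0 h2)]
    refine (angle_le_mul_norm_sub (by simp [ht0]) (by simp [hτ0])).trans ?_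
    have := norm_inv_norm_smul_sub_le ht0 hτ
    nlinarith [Real.pi_le_four, Real.pi_pos, norm_nonneg (t - τ)]
  · rw [add_sub_cancel_left]
    exact abs_arg_le_pi _

lemma ball_subset_extDisk {τ : ℂ} {s : ℝ} (hs : s ≤ ‖τ‖ - 1) : ball τ s ⊆ extDisk := fun t ht => by
  rw [mem_ball, dist_comm, dist_eq_norm] at ht
  have := norm_sub_norm_le τ t
  simp only [extDisk, mem_ofPred_eq]; linarith

namespace IsExtParam

variable {Ψ : ℂ → ℂ} (h : IsExtParam Ψ)
include h

/-- Lower distortion bound near an interior point. -/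
lemma mul_norm_deriv_le {τ t : ℂ} {s : ℝ} (hs : 0 ≤ s) (hsτ : s ≤ ‖τ‖ - 1) (ht : 1 ≤ ‖t‖)
    (hst : s ≤ dist t τ) : s * ‖deriv Ψ τ‖ ≤ 12 * koebeConst * dist (Ψ t) (Ψ τ) := by
  rcases hs.eq_or_lt with rfl | hs
  · have := koebeConst_pos; rw [zero_mul]; positivity
  rw [dist_eq_norm]
  refine mul_norm_deriv_le_of_le_dist hs (h.differentiableOn.mono (ball_subset_extDisk hsτ))
    (h.injOn.mono (insert_subset ht fun z hz => ?_)) (by linarith)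
  exact le_of_lt (show 1 < ‖z‖ from ball_subset_extDisk hsτ hz)

/-- Upper distortion bound near an interior point. -/
lemma dist_le_of_le_half {τ t : ℂ} {s : ℝ} (hs : 0 < s) (hsτ : s ≤ ‖τ‖ - 1)
    (hst : dist t τ ≤ s / 2) : dist (Ψ t) (Ψ τ) ≤ koebeConst * (s * ‖deriv Ψ τ‖) := by
  rw [dist_eq_norm]
  refine norm_sub_le_mul_norm_deriv hs (h.differentiableOn.mono (ball_subset_extDisk hsτ))
    (h.injOn.mono fun z hz => ?_) (h.deriv_ne_zero _ ?_) hst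
  · exact le_of_lt (show 1 < ‖z‖ from ball_subset_extDisk hsτ hz)
  · exact ball_subset_extDisk hsτ (mem_ball_self hs)

/-- Upper distortion bound on disks comparable to the distance to the unit circle. -/
lemma exists_dist_le {M : ℝ} (hM : HasBoundedTurning Ψ M) {K : ℝ} (hK : 0 < K) :
    ∃ C > 0, ∀ τ t : ℂ, 1 < ‖τ‖ → 1 ≤ ‖t‖ → dist t τ ≤ K * (‖τ‖ - 1) →
      dist (Ψ t) (Ψ τ) ≤ C * ((‖τ‖ - 1) * ‖deriv Ψ τ‖) := by
  obtain ⟨B, hB, hgrowth⟩ := h.growth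
  set D : ℝ := 4 * K + 2 with hD
  have hD0 : 0 < D := by positivity
  obtain ⟨m, hm, hlower⟩ := h.lower (1 + 1 / (2 * D)) (by
    have : 0 < 1 / (2 * D) := by positivity
    linarith)
  set C₀ := (1 + 2 * M) * Real.exp 7 * (2 * harnackConst ^ 4) with hC₀
  set n := ⌈4 * D⌉₊ with hn
  have hA := harnackConst_pos
  have hM1 := hM.1
  have hC₀pos : 0 < C₀ := by positivity
  have hC1 : 0 < 4 * C₀ * D * harnackConst ^ n := by positivity
  have hC2 : 0 < B * (2 * (2 * D + 1) + K) / m := by positivity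
  refine ⟨max (4 * C₀ * D * harnackConst ^ n) (B * (2 * (2 * D + 1) + K) / m),
    lt_max_of_lt_left hC1, fun τ t hτ ht htτ => ?_⟩
  have hε : 0 < ‖τ‖ - 1 := by linarith
  set ε := ‖τ‖ - 1 with hεdef
  set L := ‖deriv Ψ τ‖ with hL
  have hLpos : 0 < L := norm_pos_iff.2 (h.deriv_ne_zero _ hτ)
  have htn : ‖t‖ ≤ ‖τ‖ + K * ε := by
    have := norm_sub_norm_le t τ
    rw [dist_eq_norm] at htτ; linarith
  rcases le_or_gt ε (1 / (2 * D)) with hcase | hcase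
  · refine le_trans ?_ (mul_le_mul_of_nonneg_right (le_max_left _ _) (by positivity))
    have hDε : D * ε ≤ 1 / 2 := by
      rw [le_div_iff₀ (by positivity)] at hcase; linarith
    have hε4 : ε ≤ 1 / 4 := by nlinarith
    obtain ⟨φ, θ, hφ, hθ, hφθ, -⟩ := exists_exp_eq_exp_eq ht hτ.le
    set l := Real.log ‖τ‖ with hl
    have hl1 : l ≤ ε := Real.log_le_sub_one_of_pos (by linarith)
    have hl2 : ε / 2 ≤ l := by
      have h1 := Real.one_sub_inv_le_log_of_pos (show 0 < ‖τ‖ by linarith)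
      refine le_trans ?_ h1
      have : 1 - ‖τ‖⁻¹ = ε / ‖τ‖ := by rw [hεdef]; field_simp
      rw [this]
      exact div_le_div_of_nonneg_left hε.le (by linarith) (by linarith)
    have hl0 : 0 < l := by linarith
    rw [← dist_eq_norm] at hφθ
    have hφθ' := abs_le.1 (hφθ.trans (mul_le_mul_of_nonneg_left htτ zero_le_four))
    have hx0 : 0 < D * ε := by positivity
    have hKε : 0 < K * ε := by positivity
    have hre : ∀ a b : ℝ, (a + b * I : ℂ).re = a := by simp
    have him : ∀ a b : ℝ, (a + b * I : ℂ).im = b := by simp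
    have hDK : D * ε = 4 * (K * ε) + 2 * ε := by rw [hD]; ring
    have hlt : Real.log ‖t‖ ≤ D * ε := by
      have := Real.log_le_sub_one_of_pos (show 0 < ‖t‖ by linarith)
      linarith
    have e1 := h.norm_exp_sub_le_of_mem_rect hM (θ := θ) hx0 hDε (w := Real.log ‖t‖ + φ * I)
      (by rw [hre]; exact ⟨Real.log_nonneg ht, hlt⟩)
      (by rw [him]; constructor <;> linarith [hφθ'.1, hφθ'.2])
    have e2 := h.norm_exp_sub_le_of_mem_rect hM (θ := θ) hx0 hDε (w := l + θ * I)
      (by rw [hre]; exact ⟨hl0.le, by linarith⟩)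
      (by rw [him]; constructor <;> linarith)
    rw [hφ] at e1
    rw [hθ] at e2
    have hdist : dist (l + θ * I : ℂ) ((D * ε : ℝ) + θ * I) = D * ε - l := by
      rw [dist_comm, dist_eq_norm, add_sub_add_right_eq_sub, ← ofReal_sub, norm_real,
        Real.norm_of_nonneg (by linarith)]
    have e3 := h.norm_deriv_exp_le hl0 (by linarith [Real.pi_gt_three]) n (w := l + θ * I)
      (w' := (D * ε : ℝ) + θ * I) (by rw [hre]) (by rw [hre]; linarith) (by
        rw [hdist]
        have : 4 * D ≤ n := Nat.le_ceil _
        nlinarith)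
    rw [h.norm_deriv_exp (w := l + θ * I) (by rwa [hre]), hθ] at e3
    have e4 : Real.exp (l + θ * I : ℂ).re ≤ 2 := by
      rw [hre, hl, Real.exp_log (by linarith)]; linarith
    have e5 : ‖deriv (fun w => Ψ (exp w)) ((D * ε : ℝ) + θ * I)‖ ≤ harnackConst ^ n * (L * 2) :=
      e3.trans (by gcongr)
    calc dist (Ψ t) (Ψ τ) ≤ C₀ * (D * ε * (harnackConst ^ n * (L * 2))) +
          C₀ * (D * ε * (harnackConst ^ n * (L * 2))) := by
          refine (dist_triangle_right _ _ (Ψ (exp ((D * ε : ℝ) + θ * I)))).trans ?_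
          rw [dist_eq_norm, dist_eq_norm]
          refine add_le_add (e1.trans ?_) (e2.trans ?_) <;> gcongr
      _ = _ := by ring
  · refine le_trans ?_ (mul_le_mul_of_nonneg_right (le_max_right _ _) (by positivity))
    have h1 : m ≤ L := hlower τ (by linarith)
    rw [div_lt_iff₀ (by positivity)] at hcase
    calc dist (Ψ t) (Ψ τ) ≤ ‖Ψ t‖ + ‖Ψ τ‖ := dist_le_norm_add_norm _ _
      _ ≤ B * ‖t‖ + B * ‖τ‖ := add_le_add (hgrowth t ht) (hgrowth τ hτ.le)
      _ ≤ B * (2 * (2 * D + 1) + K) * ε := by nlinarith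
      _ = B * (2 * (2 * D + 1) + K) / m * (ε * m) := by field_simp
      _ ≤ _ := by gcongr

end IsExtParam

namespace IsExtParam

variable {Ψ : ℂ → ℂ} (h : IsExtParam Ψ)
include h

lemma mul_norm_deriv_exp_le_of_boundary {M : ℝ} (hM : HasBoundedTurning Ψ M) {y₁ y₂ : ℝ}
    (hy : y₁ < y₂) (hyπ : y₂ ≤ y₁ + Real.pi) :
    (y₂ - y₁) * ‖deriv (fun w => Ψ (exp w)) ((y₂ - y₁ : ℝ) + y₁ * I)‖ ≤
      harnackConst ^ 2 * (12 * koebeConst * (Real.exp 7 * (2 * M))) *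
        ‖Ψ (exp (y₁ * I)) - Ψ (exp (y₂ * I))‖ := by
  set l := y₂ - y₁ with hl
  have hl0 : 0 < l := by linarith
  have hA := harnackConst_pos
  have hk := koebeConst_pos
  have hM1 := hM.1
  have hre : ∀ a b : ℝ, (a + b * I : ℂ).re = a := by simp
  have him : ∀ a b : ℝ, (a + b * I : ℂ).im = b := by simp
  set d := ‖Ψ (exp (y₁ * I)) - Ψ (exp (y₂ * I))‖ with hd
  have hd0 : 0 < d := by
    rw [hd, norm_pos_iff, sub_ne_zero]
    intro heq
    have h1 := h.exp_inj (w := y₁ * I) (w' := y₂ * I) (by simp) (by simp) (by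
      simp only [mul_im, ofReal_re, I_im, mul_one, ofReal_im, I_re, mul_zero, add_zero]
      rw [abs_lt]; constructor <;> linarith [Real.pi_pos]) heq
    have h2 : y₁ = y₂ := by simpa using congrArg Complex.im h1
    exact hy.ne h2
  obtain ⟨y, hyI, hseg⟩ := h.exists_segment_lt (a := y₁) (b := y₂) (r := 2 * M * d)
    (p := Ψ (exp (y₁ * I))) hl0 le_rfl (by linarith) (by positivity) fun y hyI => by
      have h1 := hM.2 y₁ y₂ y hy hyπ (Ioo_subset_Icc_self hyI)
      have hc : ContinuousOn (fun x : ℝ => ‖Ψ (exp (x + y * I)) - Ψ (exp (y₁ * I))‖)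
          (Icc 0 l) := by
        refine ((h.continuousOn_exp.comp (f := fun x : ℝ => (x + y * I : ℂ)) (by fun_prop)
          fun x hx => ?_).sub continuousOn_const).norm
        simpa using hx.1
      have h2 : ∀ᶠ x : ℝ in 𝓝[Icc 0 l] 0, ‖Ψ (exp (x + y * I)) - Ψ (exp (y₁ * I))‖ < 2 * M * d := by
        refine (hc 0 ⟨le_rfl, hl0.le⟩).eventually_lt_const ?_
        simp only [ofReal_zero, zero_add]
        have : 0 < M * d := by positivity
        exact h1.trans_lt (by linarith)
      have h3 : ∀ᶠ x in 𝓝[>] (0 : ℝ), x ∈ Ioc 0 l := Ioc_mem_nhdsGT hl0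
      have h4 : ∀ᶠ x : ℝ in 𝓝[>] 0,
          ‖Ψ (exp (x + y * I)) - Ψ (exp (y₁ * I))‖ < 2 * M * d := by
        rw [← nhdsWithin_Ioc_eq_nhdsGT hl0]
        exact h2.filter_mono (nhdsWithin_mono _ Ioc_subset_Icc_self)
      obtain ⟨x, hx, hx'⟩ := (h3.and h4).exists
      exact ⟨x, hx, hx'.le⟩
  have h1 := hseg l ⟨hl0.le, le_rfl⟩
  have h2 := mul_norm_deriv_le_of_le_dist (f := fun w => Ψ (exp w)) (w₀ := l + y * I)
    (w := y₁ * I) hl0 (h.differentiableOn_exp_ball (by rw [hre])) ?_ ?_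
  · rw [norm_sub_rev] at h2
    have h3 := h.norm_deriv_exp_le hl0 (by linarith) 2 (w := l + y * I) (w' := l + y₁ * I)
      (by rw [hre]) (by rw [hre]) (by
        rw [dist_eq_norm, add_sub_add_left_eq_sub, ← sub_mul, norm_mul, norm_I, mul_one,
          ← ofReal_sub, norm_real, Real.norm_of_nonneg (by linarith [hyI.1])]
        push_cast; linarith [hyI.2])
    calc l * ‖deriv (fun w => Ψ (exp w)) (l + y₁ * I)‖
        ≤ l * (harnackConst ^ 2 * ‖deriv (fun w => Ψ (exp w)) (l + y * I)‖) := by gcongr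
      _ = harnackConst ^ 2 * (l * ‖deriv (fun w => Ψ (exp w)) (l + y * I)‖) := by ring
      _ ≤ harnackConst ^ 2 * (12 * koebeConst * (Real.exp 7 * (2 * M * d))) := by
          refine mul_le_mul_of_nonneg_left (h2.trans ?_) (by positivity)
          exact mul_le_mul_of_nonneg_left h1 (by positivity)
      _ = _ := by ring
  · have hmem : ∀ v ∈ insert (y₁ * I : ℂ) (ball (l + y * I : ℂ) l), 0 ≤ v.re ∧ |v.im - y| < l := by
      rintro v (rfl | hv)
      · simp only [mul_re, ofReal_re, I_re, mul_zero, ofReal_im, I_im, mul_one, sub_self,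
          mul_im, add_zero, le_refl, true_and]
        rw [abs_lt]; constructor <;> linarith [hyI.1, hyI.2]
      · rw [mem_ball, dist_eq_norm] at hv
        have e1 := abs_lt.1 ((Complex.abs_re_le_norm _).trans_lt hv)
        have e2 := (Complex.abs_im_le_norm _).trans_lt hv
        rw [sub_re, hre] at e1
        rw [sub_im, him] at e2
        exact ⟨by linarith, e2⟩
    intro v hv v' hv' heq
    obtain ⟨e1, e2⟩ := hmem v hv
    obtain ⟨e3, e4⟩ := hmem v' hv'
    rw [abs_lt] at e2 e4
    exact h.exp_inj e1 e3 (by rw [abs_lt]; constructor <;> linarith) heq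
  · rw [dist_comm, dist_eq_norm]
    have := Complex.abs_re_le_norm (l + y * I - y₁ * I)
    rw [sub_re, hre] at this
    simp only [mul_re, ofReal_re, I_re, mul_zero, ofReal_im, I_im, mul_one, sub_self,
      sub_zero, abs_of_pos hl0] at this
    linarith

/-- Two boundary points see each other through an interior point at comparable distance. -/
lemma exists_interior_of_boundary {M : ℝ} (hM : HasBoundedTurning Ψ M) :
    ∃ C > 0, ∀ t₁ t₃ : ℂ, ‖t₁‖ = 1 → ‖t₃‖ = 1 → t₁ ≠ t₃ → ∃ τ : ℂ, 1 < ‖τ‖ ∧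
      dist t₁ t₃ ≤ ‖τ‖ - 1 ∧ dist t₁ τ ≤ 2 * (‖τ‖ - 1) ∧
        (‖τ‖ - 1) * ‖deriv Ψ τ‖ ≤ C * dist (Ψ t₁) (Ψ t₃) := by
  have hA := harnackConst_pos
  have hk := koebeConst_pos
  have hM1 := hM.1
  set C := harnackConst ^ 2 * (12 * koebeConst * (Real.exp 7 * (2 * M))) with hC
  refine ⟨C, by positivity, ?_⟩
  have main : ∀ y₁ y₂ : ℝ, y₁ < y₂ → y₂ ≤ y₁ + Real.pi → ∃ τ : ℂ, 1 < ‖τ‖ ∧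
      dist (exp (y₁ * I)) (exp (y₂ * I)) ≤ ‖τ‖ - 1 ∧ dist (exp (y₁ * I)) τ ≤ ‖τ‖ - 1 ∧
        (‖τ‖ - 1) * ‖deriv Ψ τ‖ ≤ C * dist (Ψ (exp (y₁ * I))) (Ψ (exp (y₂ * I))) := by
    intro y₁ y₂ hy hyπ
    have key := h.mul_norm_deriv_exp_le_of_boundary hM hy hyπ
    set l := y₂ - y₁ with hl
    have hl0 : 0 < l := by linarith
    have hre : ∀ a b : ℝ, (a + b * I : ℂ).re = a := by simp
    have hnorm : ‖exp (l + y₁ * I)‖ = Real.exp l := by rw [norm_exp, hre]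
    rw [h.norm_deriv_exp (by rwa [hre]), hre] at key
    have hle : l ≤ Real.exp l - 1 := by linarith [Real.add_one_le_exp l]
    refine ⟨exp (l + y₁ * I), ?_, ?_, ?_, ?_⟩
    · rw [hnorm]; linarith
    · rw [hnorm]
      refine le_trans ?_ hle
      have e : exp (y₁ * I) - exp (y₂ * I) = - (exp (y₁ * I) * (exp (I * l) - 1)) := by
        have : exp (y₂ * I) = exp (y₁ * I) * exp (I * l) := by
          rw [← exp_add]; congr 1; rw [hl]; push_cast; ring
        rw [this]; ring
      rw [dist_eq_norm, e, norm_neg, norm_mul, norm_exp_ofReal_mul_I, one_mul]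
      exact (Real.norm_exp_I_mul_ofReal_sub_one_le).trans (by
        rw [Real.norm_of_nonneg hl0.le])
    · have e : exp (y₁ * I) - exp (l + y₁ * I) = exp (y₁ * I) * ((1 - Real.exp l : ℝ) : ℂ) := by
        rw [exp_add]; push_cast; ring
      rw [hnorm, dist_eq_norm, e, norm_mul, norm_exp_ofReal_mul_I, one_mul, norm_real,
        Real.norm_of_nonpos (by linarith)]
      linarith
    · rw [hnorm, dist_eq_norm]
      refine le_trans ?_ key
      have : Real.exp l - 1 ≤ l * Real.exp l := by
        have e1 := Real.add_one_le_exp (-l)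
        have e2 : Real.exp (-l) * Real.exp l = 1 := by rw [← Real.exp_add]; simp
        nlinarith [Real.exp_pos l]
      nlinarith [norm_nonneg (deriv Ψ (exp (l + y₁ * I)))]
  intro t₁ t₃ ht₁ ht₃ hne
  obtain ⟨φ, θ, hφ, hθ, -, hπ⟩ := exists_exp_eq_exp_eq ht₁.ge ht₃.ge
  rw [ht₁, Real.log_one, ofReal_zero, zero_add] at hφ
  rw [ht₃, Real.log_one, ofReal_zero, zero_add] at hθ
  rw [abs_le] at hπ
  rcases lt_trichotomy φ θ with hlt | heq | hlt
  · obtain ⟨τ, h1, h2, h3, h4⟩ := main φ θ hlt (by linarith)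
    rw [hφ, hθ] at h2 h4
    rw [hφ] at h3
    exact ⟨τ, h1, h2, by linarith, h4⟩
  · exact absurd (by rw [← hφ, ← hθ, heq]) hne
  · obtain ⟨τ, h1, h2, h3, h4⟩ := main θ φ hlt (by linarith)
    rw [hφ, hθ, dist_comm] at h2
    rw [hφ, hθ, dist_comm (Ψ t₃)] at h4
    rw [hθ] at h3
    exact ⟨τ, h1, h2, (dist_triangle t₁ t₃ τ).trans (by linarith), h4⟩

lemma dist_le_of_far_from_circle {c C : ℝ} (hc : 1 ≤ c) (hC : 0 < C)
    (hF2 : ∀ τ t : ℂ, 1 < ‖τ‖ → 1 ≤ ‖t‖ → dist t τ ≤ 8 * c * (‖τ‖ - 1) →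
      dist (Ψ t) (Ψ τ) ≤ C * ((‖τ‖ - 1) * ‖deriv Ψ τ‖)) {a b e : ℂ} (hb : 1 ≤ ‖b‖)
    (he : 1 ≤ ‖e‖) (hr : 0 < dist a e) (har : dist a e / 4 ≤ ‖a‖ - 1)
    (hab : dist a b ≤ 2 * c * dist a e) :
    dist (Ψ a) (Ψ b) ≤ 192 * c * (koebeConst + C) * koebeConst * dist (Ψ a) (Ψ e) := by
  set k := koebeConst with hkdef
  have hk : 1 ≤ k := one_le_koebeConst
  set r := dist a e with hrdef
  set L := ‖deriv Ψ a‖ with hL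
  have hL0 : 0 ≤ L := norm_nonneg _
  have h1 := h.mul_norm_deriv_le (τ := a) (t := e) (s := r / 4) (by positivity) har he
    (by rw [dist_comm, ← hrdef]; linarith)
  rw [dist_comm] at h1
  have h2 : dist (Ψ a) (Ψ b) ≤ 4 * c * (k + C) * (r * L) := by
    rw [dist_comm]
    rcases le_or_gt (4 * c * r) (‖a‖ - 1) with hcase | hcase
    · have := h.dist_le_of_le_half (τ := a) (t := b) (s := 4 * c * r) (by positivity) hcase
        (by rw [dist_comm]; linarith)
      refine this.trans ?_
      have : 0 ≤ 4 * c * C * (r * L) := by positivity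
      nlinarith
    · have h3 := hF2 a b (by linarith) hb (by rw [dist_comm]; nlinarith)
      refine h3.trans ?_
      have h4 : (‖a‖ - 1) * L ≤ 4 * c * r * L := by gcongr
      have h5 : 0 ≤ 4 * c * k * (r * L) := by positivity
      nlinarith
  have h3 : r * L ≤ 48 * k * dist (Ψ a) (Ψ e) := by linarith
  calc dist (Ψ a) (Ψ b) ≤ 4 * c * (k + C) * (r * L) := h2
    _ ≤ 4 * c * (k + C) * (48 * k * dist (Ψ a) (Ψ e)) := by gcongr
    _ = _ := by ring

lemma dist_radial_projection_le {c C : ℝ} (hc : 1 ≤ c) (hC : 0 < C)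
    (hF2 : ∀ τ t : ℂ, 1 < ‖τ‖ → 1 ≤ ‖t‖ → dist t τ ≤ 8 * c * (‖τ‖ - 1) →
      dist (Ψ t) (Ψ τ) ≤ C * ((‖τ‖ - 1) * ‖deriv Ψ τ‖)) {a e : ℂ} (ha : 1 ≤ ‖a‖)
    (he : 1 ≤ ‖e‖) (hae : ‖a‖ - 1 ≤ dist a e) :
    ‖a / ‖a‖‖ = 1 ∧ dist a (a / ‖a‖) = ‖a‖ - 1 ∧
      dist (Ψ a) (Ψ (a / ‖a‖)) ≤ 12 * koebeConst * C * dist (Ψ a) (Ψ e) := by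
  set k := koebeConst with hkdef
  have hk : 1 ≤ k := one_le_koebeConst
  have ha0 : (‖a‖ : ℂ) ≠ 0 := by rw [ofReal_ne_zero]; linarith
  have h1 : ‖a / ‖a‖‖ = 1 := by
    rw [norm_div, norm_real, norm_norm, div_self (by linarith)]
  have h2 : dist a (a / ‖a‖) = ‖a‖ - 1 := by
    have : a - a / ‖a‖ = (a / ‖a‖) * ((‖a‖ - 1 : ℝ) : ℂ) := by push_cast; field_simp
    rw [dist_eq_norm, this, norm_mul, h1, one_mul, norm_real,
      Real.norm_of_nonneg (by linarith)]
  refine ⟨h1, h2, ?_⟩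
  rcases ha.eq_or_lt with heq | hlt
  · have : a / ‖a‖ = a := by rw [← heq]; simp
    rw [this, dist_self]; positivity
  · have h3 := hF2 a (a / ‖a‖) hlt h1.ge (by rw [dist_comm, h2]; nlinarith)
    have h4 := h.mul_norm_deriv_le (τ := a) (t := e) (s := ‖a‖ - 1) (by linarith) le_rfl he
      (by rwa [dist_comm])
    rw [dist_comm] at h3 h4
    nlinarith

/-- Weak quasisymmetry of the exterior parametrization. -/
theorem exists_weak_quasisymmetric {M : ℝ} (hM : HasBoundedTurning Ψ M) {c : ℝ} (hc : 1 ≤ c) :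
    ∃ H > 0, ∀ t₁ t₂ t₃ : ℂ, 1 ≤ ‖t₁‖ → 1 ≤ ‖t₂‖ → 1 ≤ ‖t₃‖ →
      dist t₁ t₂ ≤ c * dist t₁ t₃ → dist (Ψ t₁) (Ψ t₂) ≤ H * dist (Ψ t₁) (Ψ t₃) := by
  obtain ⟨C, hC, hF2⟩ := h.exists_dist_le hM (K := 8 * c) (by linarith)
  obtain ⟨C', hC', hF3⟩ := h.exists_interior_of_boundary hM
  set k := koebeConst with hkdef
  have hk : 1 ≤ k := one_le_koebeConst
  refine ⟨1 + 192 * c * (k + C) * k + 2 * C * (C' * (24 * k * C + 1)), by positivity,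
    fun t₁ t₂ t₃ ht₁ ht₂ ht₃ h12 => ?_⟩
  have hd0 : 0 ≤ dist (Ψ t₁) (Ψ t₃) := dist_nonneg
  set d := dist (Ψ t₁) (Ψ t₃) with hd
  have hN : 0 ≤ 192 * c * (k + C) * k := by positivity
  have hQ : 0 ≤ 2 * C * (C' * (24 * k * C + 1)) := by positivity
  have hNd := mul_nonneg hN hd0
  have hQd := mul_nonneg hQ hd0
  set N := 192 * c * (k + C) * k with hNdef
  set Q := 2 * C * (C' * (24 * k * C + 1)) with hQdef
  rcases (dist_nonneg : 0 ≤ dist t₁ t₃).eq_or_lt with hr | hr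
  · rw [← hr, mul_zero] at h12
    rw [dist_le_zero.1 h12, dist_self]; nlinarith
  rcases le_or_gt (dist t₁ t₃ / 4) (‖t₁‖ - 1) with hcase1 | hcase1
  · have := h.dist_le_of_far_from_circle hc hC hF2 ht₂ ht₃ hr hcase1 (by nlinarith)
    nlinarith
  rcases le_or_gt (dist t₁ t₃ / 4) (‖t₃‖ - 1) with hcase3 | hcase3
  · rw [dist_comm] at hr hcase3
    have := h.dist_le_of_far_from_circle hc hC hF2 ht₂ ht₁ hr hcase3 (by
      have h1 := dist_triangle t₃ t₁ t₂
      rw [dist_comm t₁ t₃] at h12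
      nlinarith)
    rw [dist_comm (Ψ t₃) (Ψ t₁)] at this
    have h1 := dist_triangle (Ψ t₁) (Ψ t₃) (Ψ t₂)
    nlinarith
  obtain ⟨a1, a2, a3⟩ := h.dist_radial_projection_le hc hC hF2 ht₁ ht₃ (by linarith)
  obtain ⟨b1, b2, b3⟩ := h.dist_radial_projection_le hc hC hF2 ht₃ ht₁ (by rw [dist_comm]; linarith)
  rw [dist_comm (Ψ t₃) (Ψ t₁), ← hd] at b3
  rw [← hd] at a3
  set s₁ := t₁ / ‖t₁‖
  set s₃ := t₃ / ‖t₃‖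
  have hs : dist t₁ t₃ / 2 ≤ dist s₁ s₃ := by
    have := dist_triangle4 t₁ s₁ s₃ t₃
    rw [dist_comm s₃ t₃] at this
    linarith
  have hz : dist (Ψ s₁) (Ψ s₃) ≤ (24 * k * C + 1) * d := by
    have := dist_triangle4 (Ψ s₁) (Ψ t₁) (Ψ t₃) (Ψ s₃)
    rw [dist_comm (Ψ s₁) (Ψ t₁), ← hd] at this
    linarith
  obtain ⟨τ, hτ, e1, e2, e3⟩ := hF3 s₁ s₃ a1 b1 (dist_pos.1 (by linarith))
  have hτ1 : dist t₁ τ ≤ 8 * c * (‖τ‖ - 1) := by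
    have := dist_triangle t₁ s₁ τ
    nlinarith
  have hτ2 : dist t₂ τ ≤ 8 * c * (‖τ‖ - 1) := by
    have h1 := dist_triangle4 t₂ t₁ s₁ τ
    rw [dist_comm t₂ t₁] at h1
    nlinarith
  have f1 := hF2 τ t₁ hτ ht₁ hτ1
  have f2 := hF2 τ t₂ hτ ht₂ hτ2
  have f3 : (‖τ‖ - 1) * ‖deriv Ψ τ‖ ≤ C' * ((24 * k * C + 1) * d) :=
    e3.trans (mul_le_mul_of_nonneg_left hz hC'.le)
  have f4 := dist_triangle_right (Ψ t₁) (Ψ t₂) (Ψ τ)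
  have f5 : dist (Ψ t₁) (Ψ t₂) ≤ Q * d := by
    calc _ ≤ C * ((‖τ‖ - 1) * ‖deriv Ψ τ‖) + C * ((‖τ‖ - 1) * ‖deriv Ψ τ‖) := by linarith
      _ ≤ C * (C' * ((24 * k * C + 1) * d)) + C * (C' * ((24 * k * C + 1) * d)) := by gcongr
      _ = Q * d := by rw [hQdef]; ring
  nlinarith

end IsExtParam

/-- `g` is weakly quasisymmetric on `S`, for the constants `c` and `H`. -/
def IsWeakQS (g : ℂ → ℂ) (S : Set ℂ) (c H : ℝ) : Prop :=
  ∀ x₁ ∈ S, ∀ x₂ ∈ S, ∀ x₃ ∈ S, dist x₁ x₂ ≤ c * dist x₁ x₃ →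
    dist (g x₁) (g x₂) ≤ H * dist (g x₁) (g x₃)

/-- Every circle centred on `S` meets `S`. -/
def MeetsCircles (S : Set ℂ) : Prop := ∀ x ∈ S, ∀ r : ℝ, 0 ≤ r → ∃ w ∈ S, dist x w = r

namespace IsWeakQS

variable {g : ℂ → ℂ} {S : Set ℂ} {H : ℝ}

lemma dist_le_pow (hg : IsWeakQS g S 3 H) (hH : 0 < H) (hS : MeetsCircles S) (n : ℕ)
    {x₁ x₂ x₃ : ℂ} (h₁ : x₁ ∈ S) (h₂ : x₂ ∈ S) (h₃ : x₃ ∈ S)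
    (hle : dist x₁ x₃ ≤ 2 ^ n * dist x₁ x₂) :
    dist (g x₁) (g x₃) ≤ H * (1 + H) ^ n * dist (g x₁) (g x₂) := by
  induction n generalizing x₃ with
  | zero =>
    rw [pow_zero, one_mul] at hle
    rw [pow_zero, mul_one]
    refine hg _ h₁ _ h₃ _ h₂ (hle.trans ?_)
    linarith [dist_nonneg (x := x₁) (y := x₂)]
  | succ n ih =>
    obtain ⟨w, hw, hwd⟩ := hS x₁ h₁ (dist x₁ x₃ / 2) (by positivity)
    have h1 := ih hw (by rw [hwd]; rw [pow_succ] at hle; linarith)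
    have h2 : dist (g w) (g x₃) ≤ H * dist (g w) (g x₁) := by
      refine hg w hw x₃ h₃ x₁ h₁ ?_
      have := dist_triangle w x₁ x₃
      rw [dist_comm w x₁] at this ⊢
      linarith
    have h3 := dist_triangle (g x₁) (g w) (g x₃)
    rw [dist_comm (g w) (g x₁)] at h2
    calc dist (g x₁) (g x₃) ≤ (1 + H) * dist (g x₁) (g w) := by linarith
      _ ≤ (1 + H) * (H * (1 + H) ^ n * dist (g x₁) (g x₂)) := by gcongr
      _ = _ := by ring

/-- Power distortion of weakly quasisymmetric maps. -/
lemma ratio_le_rpow (hg : IsWeakQS g S 3 H) (hH : 0 < H) (hS : MeetsCircles S) {α : ℝ}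
    (hα : Real.logb 2 (1 + H) ≤ α) {x₁ x₂ x₃ : ℂ} (h₁ : x₁ ∈ S) (h₂ : x₂ ∈ S) (h₃ : x₃ ∈ S)
    (hpos : 0 < dist x₁ x₂) (hle : dist x₁ x₂ ≤ dist x₁ x₃) :
    dist (g x₁) (g x₃) ≤ H * (1 + H) * (dist x₁ x₃ / dist x₁ x₂) ^ α * dist (g x₁) (g x₂) := by
  set R := dist x₁ x₃ / dist x₁ x₂ with hR
  have hR1 : 1 ≤ R := (one_le_div hpos).2 hle
  have hR0 : 0 < R := by linarith
  set n := ⌈Real.logb 2 R⌉₊ with hn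
  have hn1 : Real.logb 2 R ≤ n := Nat.le_ceil _
  have hn2 : (n : ℝ) ≤ Real.logb 2 R + 1 :=
    (Nat.ceil_lt_add_one (Real.logb_nonneg one_lt_two hR1)).le
  have h1 : R ≤ 2 ^ n := by
    rw [← Real.rpow_natCast]
    exact (Real.logb_le_iff_le_rpow one_lt_two hR0).1 hn1
  have h2 := hg.dist_le_pow hH hS n h₁ h₂ h₃ ((div_le_iff₀ hpos).1 h1)
  have h3 : (1 + H) ^ n ≤ (1 + H) * R ^ α := by
    calc (1 + H) ^ n = (1 + H) ^ (n : ℝ) := (Real.rpow_natCast _ _).symm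
      _ ≤ (1 + H) ^ (Real.logb 2 R + 1) := Real.rpow_le_rpow_of_exponent_le (by linarith) hn2
      _ = (1 + H) * (1 + H) ^ Real.logb 2 R := by
          rw [Real.rpow_add (by linarith), Real.rpow_one, mul_comm]
      _ = (1 + H) * R ^ Real.logb 2 (1 + H) := by
          congr 1
          rw [Real.rpow_def_of_pos (by linarith), Real.rpow_def_of_pos hR0, Real.logb, Real.logb]
          congr 1; ring
      _ ≤ (1 + H) * R ^ α := by
          gcongr
  calc _ ≤ H * (1 + H) ^ n * dist (g x₁) (g x₂) := h2
    _ ≤ H * ((1 + H) * R ^ α) * dist (g x₁) (g x₂) := by gcongr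
    _ = _ := by ring

/-- The inverse of a weakly quasisymmetric map is weakly quasisymmetric. -/
lemma exists_dist_le_of_image (hg : IsWeakQS g S 3 H) (hH : 0 < H) (hS : MeetsCircles S)
    (hinj : InjOn g S) {c : ℝ} :
    ∃ K > 0, ∀ x₁ ∈ S, ∀ x₂ ∈ S, ∀ x₃ ∈ S, dist (g x₁) (g x₂) ≤ c * dist (g x₁) (g x₃) →
      dist x₁ x₂ ≤ K * dist x₁ x₃ := by
  obtain ⟨T, -, hTf, hT⟩ := finite_cover_balls_of_compact
    (isCompact_closedBall (0 : ℂ) (H * c)) (e := 1 / (2 * H ^ 2)) (by positivity)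
  set N := hTf.toFinset.card with hN
  refine ⟨4 ^ (N + 1), by positivity, fun x₁ h₁ x₂ h₂ x₃ h₃ hle => ?_⟩
  rcases (dist_nonneg : 0 ≤ dist x₁ x₃).eq_or_lt with hρ | hρ
  · have h13 : x₁ = x₃ := dist_eq_zero.1 hρ.symm
    rw [← h13, dist_self, mul_zero] at hle ⊢
    exact (dist_eq_zero.2 (hinj h₁ h₂ (dist_le_zero.1 hle))).le
  by_contra! hgt
  set ρ := dist x₁ x₃ with hρdef
  set G := dist (g x₁) (g x₃) with hG
  have hG0 : 0 < G := dist_pos.2 fun h => dist_pos.1 hρ (hinj h₁ h₃ h)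
  choose w hwS hwd using fun k : ℕ => hS x₁ h₁ (4 ^ k * ρ) (by positivity)
  have hsep : ∀ j k, j < k → G ≤ H ^ 2 * dist (g (w j)) (g (w k)) := by
    intro j k hjk
    have e1 : G ≤ H * dist (g x₁) (g (w j)) := by
      refine hg _ h₁ _ h₃ _ (hwS j) ?_
      rw [hwd]
      have : (1 : ℝ) ≤ 4 ^ j := one_le_pow₀ (by norm_num)
      nlinarith
    have e2 : dist (g (w j)) (g x₁) ≤ H * dist (g (w j)) (g (w k)) := by
      refine hg _ (hwS j) _ h₁ _ (hwS k) ?_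
      have e3 := dist_triangle x₁ (w j) (w k)
      have e4 : (4 : ℝ) ^ (j + 1) ≤ 4 ^ k := pow_le_pow_right₀ (by norm_num) hjk
      rw [hwd, hwd] at e3
      rw [dist_comm, hwd]
      rw [pow_succ] at e4
      have e5 : 4 ^ j * 4 * ρ ≤ 4 ^ k * ρ := mul_le_mul_of_nonneg_right e4 hρ.le
      have e6 : 0 < 4 ^ j * ρ := by positivity
      linarith
    rw [dist_comm] at e2
    calc G ≤ H * dist (g x₁) (g (w j)) := e1
      _ ≤ H * (H * dist (g (w j)) (g (w k))) := by gcongr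
      _ = _ := by ring
  have hbd : ∀ k ∈ Finset.range (N + 1), ∃ v ∈ hTf.toFinset,
      dist (g (w k)) (g x₁ + G * v) < G / (2 * H ^ 2) := by
    intro k hk
    have e1 : dist (g x₁) (g (w k)) ≤ H * dist (g x₁) (g x₂) := by
      refine hg _ h₁ _ (hwS k) _ h₂ ?_
      rw [hwd]
      have e2 : (4 : ℝ) ^ k ≤ 4 ^ (N + 1) :=
        pow_le_pow_right₀ (by norm_num) (Finset.mem_range.1 hk).le
      have e3 : 4 ^ k * ρ ≤ 4 ^ (N + 1) * ρ := mul_le_mul_of_nonneg_right e2 hρ.le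
      linarith [dist_nonneg (x := x₁) (y := x₂)]
    have hGc : (G : ℂ) ≠ 0 := by exact_mod_cast hG0.ne'
    have hmem : (g (w k) - g x₁) / G ∈ closedBall (0 : ℂ) (H * c) := by
      rw [mem_closedBall, dist_zero_right, norm_div, norm_real, Real.norm_of_nonneg hG0.le,
        div_le_iff₀ hG0, ← dist_eq_norm, dist_comm]
      calc _ ≤ H * dist (g x₁) (g x₂) := e1
        _ ≤ H * (c * G) := by gcongr
        _ = _ := by ring
    obtain ⟨v, hv, hv'⟩ := mem_iUnion₂.1 (hT hmem)
    refine ⟨v, hTf.mem_toFinset.2 hv, ?_⟩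
    rw [mem_ball, dist_eq_norm] at hv'
    have e : g (w k) - (g x₁ + G * v) = G * ((g (w k) - g x₁) / G - v) := by field_simp; ring
    rw [dist_eq_norm, e, norm_mul, norm_real, Real.norm_of_nonneg hG0.le]
    calc G * ‖(g (w k) - g x₁) / G - v‖ < G * (1 / (2 * H ^ 2)) := by gcongr
      _ = _ := by ring
  choose! v hvT hvd using hbd
  obtain ⟨j, hj, k, hk, hjk, heq⟩ := Finset.exists_ne_map_eq_of_card_lt_of_maps_to
    (s := Finset.range (N + 1)) (t := hTf.toFinset) (by simp [hN]) hvT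
  have hlt : dist (g (w j)) (g (w k)) < G / H ^ 2 := by
    have e1 := hvd j hj
    have e2 := hvd k hk
    rw [← heq] at e2
    have e3 := dist_triangle_right (g (w j)) (g (w k)) (g x₁ + G * v j)
    have e4 : G / (2 * H ^ 2) + G / (2 * H ^ 2) = G / H ^ 2 := by field_simp; norm_num
    linarith
  rw [lt_div_iff₀ (by positivity), mul_comm] at hlt
  rcases lt_or_gt_of_ne hjk with hlt' | hlt'
  · linarith [hsep j k hlt']
  · have := hsep k j hlt'
    rw [dist_comm] at this
    linarith

end IsWeakQS

/-- Power distortion for a homeomorphism whose inverse is weakly quasisymmetric. -/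
theorem exists_power_distortion {φ ψ : ℂ → ℂ} {S E : Set ℂ} (hφ : MapsTo φ S E)
    (hψφ : ∀ z ∈ S, ψ (φ z) = z) (hφψ : ∀ t ∈ E, φ (ψ t) = t)
    (hS : MeetsCircles S) (hE : MeetsCircles E) {H : ℝ} (hH : 0 < H) (hqs : IsWeakQS ψ E 3 H) :
    ∃ α : ℝ, 1 ≤ α ∧ ∀ c > (0:ℝ), ∃ C > (0:ℝ), ∀ z₁ z₂ z₃ : ℂ, z₁ ∈ S → z₂ ∈ S → z₃ ∈ S →
      z₁ ≠ z₂ → dist z₁ z₂ ≤ c * dist z₁ z₃ →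
      (dist (φ z₁) (φ z₃) / dist (φ z₁) (φ z₂)) ^ (1/α) ≤
          C * (dist z₁ z₃ / dist z₁ z₂) ∧
        dist z₁ z₃ / dist z₁ z₂ ≤
          C * (dist (φ z₁) (φ z₃) / dist (φ z₁) (φ z₂)) ^ α := by
  have hφinj : InjOn φ S := fun x hx y hy hxy => by rw [← hψφ x hx, hxy, hψφ y hy]
  have hψinj : InjOn ψ E := fun x hx y hy hxy => by rw [← hφψ x hx, hxy, hφψ y hy]
  have hinv : ∀ c : ℝ, ∃ K > 0, IsWeakQS φ S c K := fun c => by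
    obtain ⟨K, hK, hK'⟩ := hqs.exists_dist_le_of_image hH hE hψinj (c := c)
    refine ⟨K, hK, fun x₁ h₁ x₂ h₂ x₃ h₃ hle => hK' _ (hφ h₁) _ (hφ h₂) _ (hφ h₃) ?_⟩
    rwa [hψφ _ h₁, hψφ _ h₂, hψφ _ h₃]
  obtain ⟨H', hH', hqs'⟩ := hinv 3
  set α := max 1 (max (Real.logb 2 (1 + H)) (Real.logb 2 (1 + H'))) with hα
  have hα1 : 1 ≤ α := le_max_left _ _
  have hαH : Real.logb 2 (1 + H) ≤ α := (le_max_left _ _).trans (le_max_right _ _)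
  have hαH' : Real.logb 2 (1 + H') ≤ α := (le_max_right _ _).trans (le_max_right _ _)
  have hα0 : 0 < α := by linarith
  refine ⟨α, hα1, fun c hc => ?_⟩
  obtain ⟨K, hK, hKqs⟩ := hinv c
  set A := 1 + H' * (1 + H') with hA
  have hA1 : 1 ≤ A := by rw [hA]; nlinarith
  have hC1 : 0 < A * (1 + c) := by positivity
  have hC2 : 0 < H * (1 + H) * (1 + K ^ α) := by positivity
  refine ⟨A * (1 + c) + H * (1 + H) * (1 + K ^ α), by positivity,
    fun z₁ z₂ z₃ h₁ h₂ h₃ hne hle => ?_⟩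
  have hz12 : 0 < dist z₁ z₂ := dist_pos.2 hne
  have hz13 : 0 < dist z₁ z₃ := pos_of_mul_pos_right (hz12.trans_le hle) hc.le
  have ht12 : 0 < dist (φ z₁) (φ z₂) := dist_pos.2 fun h => hne (hφinj h₁ h₂ h)
  have ht13 : 0 < dist (φ z₁) (φ z₃) := dist_pos.2 fun h => dist_pos.1 hz13 (hφinj h₁ h₃ h)
  set T := dist (φ z₁) (φ z₃) / dist (φ z₁) (φ z₂) with hT
  set Z := dist z₁ z₃ / dist z₁ z₂ with hZ
  have hT0 : 0 < T := by positivity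
  have hZ0 : 0 < Z := by positivity
  constructor
  · suffices hs : T ^ (1 / α) ≤ A * (1 + c) * Z from hs.trans (by gcongr; linarith)
    have hroot : ∀ B : ℝ, 0 < B → B ≤ A → B ^ (1 / α) ≤ A := fun B hB hBA => by
      calc B ^ (1 / α) ≤ A ^ (1 / α) := by gcongr
        _ ≤ A ^ (1 : ℝ) := Real.rpow_le_rpow_of_exponent_le hA1 (by
            rw [div_le_one hα0]; exact hα1)
        _ = A := Real.rpow_one _
    rcases le_total (dist z₁ z₂) (dist z₁ z₃) with hcase | hcase
    · have h1 := hqs'.ratio_le_rpow hH' hS hαH' h₁ h₂ h₃ hz12 hcase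
      rw [← hZ, ← div_le_iff₀ ht12, ← hT] at h1
      calc T ^ (1 / α) ≤ (H' * (1 + H') * Z ^ α) ^ (1 / α) := by gcongr
        _ = (H' * (1 + H')) ^ (1 / α) * Z := by
            rw [Real.mul_rpow (by positivity) (by positivity), ← Real.rpow_mul hZ0.le,
              mul_one_div_cancel hα0.ne', Real.rpow_one]
        _ ≤ A * Z := by
            gcongr
            exact hroot _ (by positivity) (by linarith)
        _ ≤ _ := by
            gcongr; nlinarith
    · have h1 : T ≤ H' := by
        rw [hT, div_le_iff₀ ht12]
        exact hqs' _ h₁ _ h₃ _ h₂ (by linarith)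
      have h2 : 1 ≤ c * Z := by
        rw [hZ, mul_div_assoc', one_le_div hz12]; exact hle
      calc T ^ (1 / α) ≤ H' ^ (1 / α) := by gcongr
        _ ≤ A := hroot _ hH' (by nlinarith)
        _ ≤ A * (c * Z) := by nlinarith
        _ ≤ _ := by nlinarith [mul_pos (zero_lt_one.trans_le hA1) hZ0]
  · suffices hs : Z ≤ H * (1 + H) * (1 + K ^ α) * T ^ α from hs.trans (by gcongr; linarith)
    have hK0 : 0 < K ^ α := by positivity
    have hTα : 0 < T ^ α := by positivity
    rcases le_total (dist (φ z₁) (φ z₂)) (dist (φ z₁) (φ z₃)) with hcase | hcase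
    · have h1 := hqs.ratio_le_rpow hH hE hαH (hφ h₁) (hφ h₂) (hφ h₃) ht12 hcase
      rw [hψφ _ h₁, hψφ _ h₂, hψφ _ h₃, ← hT, ← div_le_iff₀ hz12, ← hZ] at h1
      refine h1.trans ?_
      have : 0 < H * (1 + H) * T ^ α := by positivity
      nlinarith
    · have h1 : Z ≤ H := by
        rw [hZ, div_le_iff₀ hz12]
        have := hqs _ (hφ h₁) _ (hφ h₃) _ (hφ h₂) (by linarith)
        rwa [hψφ _ h₁, hψφ _ h₂, hψφ _ h₃] at this
      have h2 : 1 ≤ K * T := by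
        rw [hT, mul_div_assoc', one_le_div ht12]
        exact hKqs _ h₁ _ h₂ _ h₃ hle
      have h3 : 1 ≤ K ^ α * T ^ α := by
        rw [← Real.mul_rpow hK.le hT0.le]
        exact Real.one_le_rpow h2 hα0.le
      calc Z ≤ H * 1 := by linarith
        _ ≤ H * (1 + H) * (K ^ α * T ^ α) := by
            gcongr
            · nlinarith
        _ ≤ _ := by
            have : 0 < H * (1 + H) * T ^ α := by positivity
            nlinarith

lemma meetsCircles_norm_ge {r₀ : ℝ} (hr₀ : 0 < r₀) : MeetsCircles {t : ℂ | r₀ ≤ ‖t‖} := by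
  intro x hx r hr
  have hx' : r₀ ≤ ‖x‖ := hx
  have hx0 : 0 < ‖x‖ := hr₀.trans_le hx'
  refine ⟨x + (r / ‖x‖ : ℝ) * x, ?_, ?_⟩
  · have h1 : x + (r / ‖x‖ : ℝ) * x = (1 + r / ‖x‖ : ℝ) * x := by push_cast; ring
    rw [mem_ofPred_eq, h1, norm_mul, norm_real, Real.norm_of_nonneg (by positivity)]
    have : 0 ≤ r / ‖x‖ := by positivity
    nlinarith
  · rw [dist_self_add_right, norm_mul, norm_real, Real.norm_of_nonneg (by positivity)]
    field_simp

/-- The inverse of the boundary extension of an exterior conformal map. -/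
def extInv (Ω : Set ℂ) (Φ : ℂ → ℂ) : ℂ → ℂ := Function.invFunOn Φ (closure Ω)

namespace IsExtConformalClosure

variable {Ω : Set ℂ} {Φ : ℂ → ℂ} (h : IsExtConformalClosure Ω Φ)
include h

lemma extInv_mem {t : ℂ} (ht : 1 ≤ ‖t‖) : extInv Ω Φ t ∈ closure Ω :=
  Function.invFunOn_mem (h.2.2.surjOn ht)

lemma apply_extInv {t : ℂ} (ht : 1 ≤ ‖t‖) : Φ (extInv Ω Φ t) = t :=
  Function.invFunOn_eq (h.2.2.surjOn ht)

lemma one_le_norm {z : ℂ} (hz : z ∈ closure Ω) : 1 ≤ ‖Φ z‖ := h.2.2.mapsTo hz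

lemma extInv_apply {z : ℂ} (hz : z ∈ closure Ω) : extInv Ω Φ (Φ z) = z :=
  h.2.2.injOn (h.extInv_mem (h.one_le_norm hz)) hz (h.apply_extInv (h.one_le_norm hz))

lemma extInv_mem_of_mem_extDisk {t : ℂ} (ht : t ∈ extDisk) : extInv Ω Φ t ∈ Ω := by
  obtain ⟨z, hz, rfl⟩ := h.1.2.1.surjOn ht
  rwa [h.extInv_apply (subset_closure hz)]

lemma injOn_extInv : InjOn (extInv Ω Φ) {t : ℂ | 1 ≤ ‖t‖} := fun t ht t' ht' heq => by
  rw [← h.apply_extInv ht, heq, h.apply_extInv ht']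

lemma growth_extInv : ∃ B > 0, ∀ t : ℂ, 1 ≤ ‖t‖ → ‖extInv Ω Φ t‖ ≤ B * ‖t‖ := by
  obtain ⟨c, hc, hlim⟩ := h.1.2.2
  have h1 := (Metric.tendsto_nhds.1 hlim (c / 2) (by positivity))
  rw [← comap_norm_atTop, eventually_comap] at h1
  obtain ⟨R, hR⟩ := eventually_atTop.1 h1
  refine ⟨max R 1 + 2 / c, by positivity, fun t ht => ?_⟩
  have hRm : 1 ≤ max R 1 := le_max_right _ _
  have h2c : 0 < 2 / c := by positivity
  rcases le_total ‖extInv Ω Φ t‖ (max R 1) with h2 | h2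
  · nlinarith
  · have h3 := hR _ ((le_max_left _ _).trans h2) _ rfl
    have h0 : 0 < ‖extInv Ω Φ t‖ := by linarith
    rw [h.apply_extInv ht, dist_eq_norm, norm_sub_rev] at h3
    have h4 : c - ‖t / extInv Ω Φ t‖ ≤ ‖(c : ℂ) - t / extInv Ω Φ t‖ := by
      have := norm_sub_norm_le (c : ℂ) (t / extInv Ω Φ t)
      rwa [norm_real, Real.norm_of_nonneg hc.le] at this
    have h5 : c / 2 < ‖t‖ / ‖extInv Ω Φ t‖ := by rw [← norm_div]; linarith
    rw [lt_div_iff₀ h0] at h5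
    have h6 : ‖extInv Ω Φ t‖ ≤ 2 / c * ‖t‖ := by
      rw [div_mul_eq_mul_div, le_div_iff₀ hc]; linarith
    nlinarith

lemma tendsto_extInv_cobounded :
    Tendsto (extInv Ω Φ) (cobounded ℂ ⊓ 𝓟 {t : ℂ | 1 ≤ ‖t‖}) (cobounded ℂ) := by
  rw [← tendsto_norm_atTop_iff_cobounded, Filter.tendsto_atTop]
  intro r
  have hcomp : IsCompact (closure Ω ∩ closedBall 0 r) :=
    (isCompact_closedBall (0 : ℂ) r).inter_left isClosed_closure
  obtain ⟨N, hN⟩ := hcomp.exists_bound_of_continuousOn (h.2.1.mono inter_subset_left)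
  rw [eventually_inf_principal]
  have h1 : ∀ᶠ t : ℂ in cobounded ℂ, N + 1 ≤ ‖t‖ :=
    tendsto_norm_cobounded_atTop.eventually_ge_atTop _
  filter_upwards [h1] with t ht ht1
  by_contra! hlt
  have := hN _ ⟨h.extInv_mem ht1, by simpa using hlt.le⟩
  rw [h.apply_extInv ht1] at this
  linarith

lemma continuousOn_extInv : ContinuousOn (extInv Ω Φ) {t : ℂ | 1 ≤ ‖t‖} := by
  intro t₀ ht₀
  obtain ⟨B, hB, hgr⟩ := h.growth_extInv
  have hcomp : IsCompact (closure Ω ∩ closedBall 0 (B * (‖t₀‖ + 1))) :=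
    (isCompact_closedBall (0 : ℂ) _).inter_left isClosed_closure
  refine hcomp.tendsto_nhds_of_unique_mapClusterPt ?_ ?_
  · have h1 : ∀ᶠ t : ℂ in 𝓝 t₀, ‖t‖ < ‖t₀‖ + 1 :=
      continuous_norm.continuousAt.eventually_lt continuousAt_const (by simp)
    filter_upwards [self_mem_nhdsWithin, mem_nhdsWithin_of_mem_nhds h1] with t ht ht1
    refine ⟨h.extInv_mem ht, ?_⟩
    rw [mem_closedBall_zero_iff]
    exact (hgr t ht).trans (by have : ‖t‖ < ‖t₀‖ + 1 := ht1; gcongr)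
  · intro y hy hcl
    have h1 : MapClusterPt (Φ y) (𝓝[{t : ℂ | 1 ≤ ‖t‖}] t₀) id := by
      rw [mapClusterPt_iff_frequently] at hcl ⊢
      intro s hs
      have h2 := (h.2.1 y hy.1).preimage_mem_nhdsWithin hs
      rw [mem_nhdsWithin_iff_exists_mem_nhds_inter] at h2
      obtain ⟨u, hu, hus⟩ := h2
      refine ((hcl u hu).and_eventually self_mem_nhdsWithin).mono fun t ht => ?_
      have := hus ⟨ht.1, h.extInv_mem ht.2⟩
      rwa [mem_preimage, h.apply_extInv ht.2] at this
    have h2 : ClusterPt (Φ y) (𝓝 t₀) := by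
      have : ClusterPt (Φ y) (𝓝[{t : ℂ | 1 ≤ ‖t‖}] t₀) := by simpa [MapClusterPt] using h1
      exact this.mono nhdsWithin_le_nhds
    have h3 : Φ y = t₀ := eq_of_nhds_neBot h2
    rw [← h3, h.extInv_apply hy.1]

lemma tendsto_extInv_div : ∃ q : ℝ, 0 < q ∧
    Tendsto (fun t => extInv Ω Φ t / t) (cobounded ℂ ⊓ 𝓟 {t : ℂ | 1 ≤ ‖t‖}) (𝓝 (q : ℂ)) := by
  obtain ⟨c, hc, hlim⟩ := h.1.2.2
  refine ⟨c⁻¹, inv_pos.2 hc, ?_⟩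
  have h1 := (hlim.comp h.tendsto_extInv_cobounded).inv₀ (ofReal_ne_zero.2 hc.ne')
  rw [ofReal_inv]
  refine h1.congr' ?_
  filter_upwards [mem_inf_of_right (mem_principal_self _)] with t ht
  simp only [Function.comp_apply]
  rw [h.apply_extInv ht, inv_div]

lemma meetsCircles : MeetsCircles (closure Ω) := by
  intro x hx r hr
  set t := Φ x with ht
  have ht1 : 1 ≤ ‖t‖ := h.one_le_norm hx
  have hpath : ∀ s : ℝ, 0 ≤ s → ‖((1 + s : ℝ) : ℂ) * t‖ = (1 + s) * ‖t‖ := fun s hs => by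
    rw [norm_mul, norm_real, Real.norm_of_nonneg (by linarith)]
  have hmem : ∀ s : ℝ, 0 ≤ s → 1 ≤ ‖((1 + s : ℝ) : ℂ) * t‖ := fun s hs => by
    rw [hpath s hs]; nlinarith
  set f : ℝ → ℝ := fun s => dist x (extInv Ω Φ (((1 + s : ℝ) : ℂ) * t)) with hf
  have hfc : ContinuousOn f (Ici 0) := by
    have h1 : ContinuousOn (fun s : ℝ => ((1 + s : ℝ) : ℂ) * t) (Ici 0) := by fun_prop
    have h2 := h.continuousOn_extInv.comp h1 fun s hs => hmem s hs
    exact (continuous_const.dist continuous_id).comp_continuousOn h2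
  have hf0 : f 0 = 0 := by simp [hf, ht, h.extInv_apply hx]
  have hlim : Tendsto f atTop atTop := by
    have h1 : Tendsto (fun s : ℝ => ((1 + s : ℝ) : ℂ) * t) atTop
        (cobounded ℂ ⊓ 𝓟 {t : ℂ | 1 ≤ ‖t‖}) := by
      refine tendsto_inf.2 ⟨?_, tendsto_principal.2 ?_⟩
      · rw [← tendsto_norm_atTop_iff_cobounded]
        refine tendsto_atTop_mono' _ ?_ tendsto_id
        filter_upwards [eventually_ge_atTop 0] with s hs
        rw [hpath s hs, id]; nlinarith
      · filter_upwards [eventually_ge_atTop 0] with s hs using hmem s hs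
    have h2 := tendsto_norm_cobounded_atTop.comp (h.tendsto_extInv_cobounded.comp h1)
    refine tendsto_atTop_mono (fun s => ?_) (tendsto_atTop_add_const_right _ (-‖x‖) h2)
    simp only [Function.comp_apply, hf]
    rw [dist_eq_norm, norm_sub_rev]
    linarith [norm_sub_norm_le (extInv Ω Φ (((1 + s : ℝ) : ℂ) * t)) x]
  obtain ⟨N, hN0, hN⟩ := ((eventually_ge_atTop 0).and (hlim.eventually_ge_atTop r)).exists
  obtain ⟨s, hs, hsr⟩ := intermediate_value_Icc hN0 (hfc.mono Icc_subset_Ici_self)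
    (show r ∈ Icc (f 0) (f N) from ⟨by rw [hf0]; exact hr, hN⟩)
  exact ⟨_, h.extInv_mem (hmem s hs.1), hsr⟩

end IsExtConformalClosure

lemma extDisk_subset : extDisk ⊆ {t : ℂ | 1 ≤ ‖t‖} := fun t (ht : 1 < ‖t‖) => ht.le

namespace IsExtConformalClosure

variable {Ω : Set ℂ} {Φ : ℂ → ℂ} (h : IsExtConformalClosure Ω Φ)
include h

lemma continuousAt_extInv {t : ℂ} (ht : t ∈ extDisk) : ContinuousAt (extInv Ω Φ) t :=
  h.continuousOn_extInv.continuousAt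
    (mem_of_superset (isOpen_extDisk.mem_nhds ht) extDisk_subset)

lemma eventually_deriv_ne_zero (hΩ : IsOpen Ω) {z : ℂ} (hz : z ∈ Ω) :
    ∀ᶠ w in 𝓝[≠] z, deriv Φ w ≠ 0 := by
  have han : AnalyticAt ℂ Φ z := h.1.1.analyticAt (hΩ.mem_nhds hz)
  rcases han.deriv.eventually_eq_zero_or_eventually_ne_zero with h0 | h0
  · exfalso
    obtain ⟨ε, hε, hball⟩ := Metric.mem_nhds_iff.1 (h0.and (hΩ.eventually_mem hz))
    have hsub : ball z ε ⊆ Ω := fun w hw => (hball hw).2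
    have hconst : ∀ w ∈ ball z ε, Φ w = Φ z := fun w hw =>
      (convex_ball z ε).is_const_of_fderivWithin_eq_zero (𝕜 := ℂ) (h.1.1.mono hsub)
        (fun w hw => by
          rw [fderivWithin_of_isOpen isOpen_ball hw]
          ext
          simpa using (hball hw).1) hw (mem_ball_self hε)
    have hw : z + (ε / 2 : ℝ) ∈ ball z ε := by
      rw [mem_ball, dist_self_add_left, norm_real, Real.norm_of_nonneg (by positivity)]
      linarith
    have := h.1.2.1.injOn (hsub hw) hz (hconst _ hw)
    simp [hε.ne'] at this
  · exact h0

lemma hasDerivAt_extInv (hΩ : IsOpen Ω) {t : ℂ} (ht : t ∈ extDisk)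
    (h0 : deriv Φ (extInv Ω Φ t) ≠ 0) :
    HasDerivAt (extInv Ω Φ) (deriv Φ (extInv Ω Φ t))⁻¹ t := by
  refine HasDerivAt.of_local_left_inverse (h.continuousAt_extInv ht)
    (h.1.1.differentiableAt (hΩ.mem_nhds (h.extInv_mem_of_mem_extDisk ht))).hasDerivAt h0 ?_
  filter_upwards [isOpen_extDisk.mem_nhds ht] with s hs using h.apply_extInv (extDisk_subset hs)

lemma differentiableOn_extInv (hΩ : IsOpen Ω) : DifferentiableOn ℂ (extInv Ω Φ) extDisk := by
  intro t ht
  have h1 := h.eventually_deriv_ne_zero hΩ (h.extInv_mem_of_mem_extDisk ht)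
  have h2 : Tendsto (extInv Ω Φ) (𝓝[≠] t) (𝓝[≠] (extInv Ω Φ t)) := by
    refine tendsto_nhdsWithin_iff.2 ⟨(h.continuousAt_extInv ht).tendsto.mono_left
      nhdsWithin_le_nhds, ?_⟩
    filter_upwards [self_mem_nhdsWithin, mem_nhdsWithin_of_mem_nhds (isOpen_extDisk.mem_nhds ht)]
      with s hs hs1 heq
    exact hs (h.injOn_extInv (extDisk_subset hs1) (extDisk_subset ht) heq)
  have h3 : ∀ᶠ s in 𝓝[≠] t, DifferentiableAt ℂ (extInv Ω Φ) s := by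
    filter_upwards [h2.eventually h1, mem_nhdsWithin_of_mem_nhds (isOpen_extDisk.mem_nhds ht)]
      with s hs hs1 using (h.hasDerivAt_extInv hΩ hs1 hs).differentiableAt
  exact (analyticAt_of_differentiable_on_punctured_nhds_of_continuousAt h3
    (h.continuousAt_extInv ht)).differentiableAt.differentiableWithinAt

lemma deriv_extInv_ne_zero (hΩ : IsOpen Ω) {t : ℂ} (ht : t ∈ extDisk) :
    deriv (extInv Ω Φ) t ≠ 0 := by
  have h1 := (h.1.1.differentiableAt
    (hΩ.mem_nhds (h.extInv_mem_of_mem_extDisk ht))).hasDerivAt.comp t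
    ((h.differentiableOn_extInv hΩ).differentiableAt (isOpen_extDisk.mem_nhds ht)).hasDerivAt
  have h2 : HasDerivAt (Φ ∘ extInv Ω Φ) 1 t := by
    refine (hasDerivAt_id t).congr_of_eventuallyEq ?_
    filter_upwards [isOpen_extDisk.mem_nhds ht] with s hs using h.apply_extInv (extDisk_subset hs)
  intro h0
  have := h1.unique h2
  rw [h0, mul_zero] at this
  exact zero_ne_one this

lemma eventually_le_norm_deriv_extInv (hΩ : IsOpen Ω) :
    ∃ m > 0, ∀ᶠ t : ℂ in cobounded ℂ, m ≤ ‖deriv (extInv Ω Φ) t‖ := by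
  obtain ⟨q, hq, hlim⟩ := h.tendsto_extInv_div
  have hk : 0 < koebeConst := zero_lt_one.trans_le one_le_koebeConst
  have h1 := Metric.tendsto_nhds.1 hlim (q / 20) (by positivity)
  rw [eventually_inf_principal, ← comap_norm_atTop, eventually_comap] at h1
  obtain ⟨R, hR⟩ := eventually_atTop.1 h1
  have hR' : ∀ t : ℂ, max R 2 ≤ ‖t‖ → ‖extInv Ω Φ t - q * t‖ ≤ q / 20 * ‖t‖ := fun t ht => by
    have h2 : 2 ≤ ‖t‖ := (le_max_right _ _).trans ht
    have h3 := hR _ ((le_max_left _ _).trans ht) t rfl (show 1 ≤ ‖t‖ by linarith)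
    have ht0 : t ≠ 0 := norm_pos_iff.1 (by linarith)
    have h4 : extInv Ω Φ t - q * t = (extInv Ω Φ t / t - q) * t := by field_simp
    rw [h4, norm_mul]
    rw [dist_eq_norm] at h3
    gcongr
  refine ⟨q / (8 * koebeConst), by positivity, ?_⟩
  filter_upwards [tendsto_norm_cobounded_atTop.eventually_ge_atTop (max R 2)] with t ht
  have ht2 : 2 ≤ ‖t‖ := (le_max_right _ _).trans ht
  have ht0 : t ≠ 0 := norm_pos_iff.1 (by linarith)
  set s := ‖t‖ - 1 with hs
  set a := s / 2 / ‖t‖ with ha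
  have hs0 : 0 < s := by linarith
  have ha0 : 0 < a := by positivity
  have hat : a * ‖t‖ = s / 2 := by rw [ha]; field_simp
  have hsub : ball t s ⊆ extDisk := ball_subset_extDisk (by linarith)
  have hd : dist (t + a * t) t = s / 2 := by
    rw [dist_self_add_left, norm_mul, norm_real, Real.norm_of_nonneg ha0.le, hat]
  have hn : ‖t + a * t‖ = ‖t‖ + s / 2 := by
    have : t + a * t = (1 + a : ℝ) * t := by push_cast; ring
    rw [this, norm_mul, norm_real, Real.norm_of_nonneg (by linarith), add_mul, hat, one_mul]
  have hK := norm_sub_le_mul_norm_deriv hs0 ((h.differentiableOn_extInv hΩ).mono hsub)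
    (h.injOn_extInv.mono (hsub.trans extDisk_subset))
    (h.deriv_extInv_ne_zero hΩ (show 1 < ‖t‖ by linarith)) hd.le
  have e1 := hR' t ht
  have e2 := hR' (t + a * t) (by rw [hn]; linarith)
  have e3 : ‖(q : ℂ) * (a * t)‖ = q * (s / 2) := by
    rw [norm_mul, norm_mul, norm_real, norm_real, Real.norm_of_nonneg hq.le,
      Real.norm_of_nonneg ha0.le, hat]
  have e4 : ‖(q : ℂ) * (a * t)‖ ≤ ‖extInv Ω Φ (t + a * t) - extInv Ω Φ t‖ +
      ‖extInv Ω Φ t - q * t‖ + ‖extInv Ω Φ (t + a * t) - q * (t + a * t)‖ := by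
    have : (q : ℂ) * (a * t) = (extInv Ω Φ (t + a * t) - extInv Ω Φ t) +
      (extInv Ω Φ t - q * t) - (extInv Ω Φ (t + a * t) - q * (t + a * t)) := by ring
    rw [this]
    exact (norm_sub_le _ _).trans (by gcongr; exact norm_add_le _ _)
  rw [e3] at e4
  rw [hn] at e2
  have e5 : q * s / 8 ≤ koebeConst * (s * ‖deriv (extInv Ω Φ) t‖) := by
    refine le_trans ?_ hK
    have : ‖t‖ ≤ 2 * s := by linarith
    nlinarith
  rw [div_le_iff₀ (by positivity)]
  have e6 : s * q ≤ s * (‖deriv (extInv Ω Φ) t‖ * (8 * koebeConst)) := by nlinarith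
  exact le_of_mul_le_mul_left e6 hs0

lemma isExtParam_extInv (hΩ : IsOpen Ω) : IsExtParam (extInv Ω Φ) where
  differentiableOn := h.differentiableOn_extInv hΩ
  deriv_ne_zero _ := h.deriv_extInv_ne_zero hΩ
  injOn := h.injOn_extInv
  continuousOn := h.continuousOn_extInv
  growth := h.growth_extInv
  lower r hr := by
    obtain ⟨m, hm, hev⟩ := h.eventually_le_norm_deriv_extInv hΩ
    rw [← comap_norm_atTop, eventually_comap] at hev
    obtain ⟨N, hN⟩ := eventually_atTop.1 hev
    set A : Set ℂ := closedBall 0 N ∩ {t | r ≤ ‖t‖} with hA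
    have hAc : IsCompact A :=
      (isCompact_closedBall _ _).inter_right (isClosed_le continuous_const continuous_norm)
    have hAsub : A ⊆ extDisk := fun t ht => hr.trans_le ht.2
    have hcont : ContinuousOn (fun t => ‖deriv (extInv Ω Φ) t‖) A :=
      (((h.differentiableOn_extInv hΩ).deriv isOpen_extDisk).continuousOn.mono hAsub).norm
    obtain ⟨m', hm', hm'A⟩ : ∃ m' > 0, ∀ t ∈ A, m' ≤ ‖deriv (extInv Ω Φ) t‖ := by
      rcases A.eq_empty_or_nonempty with he | hne
      · exact ⟨1, one_pos, by simp [he]⟩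
      · obtain ⟨t₀, ht₀, hmin⟩ := hAc.exists_isMinOn hne hcont
        exact ⟨_, norm_pos_iff.2 (h.deriv_extInv_ne_zero hΩ (hAsub ht₀)), fun t ht => hmin ht⟩
    refine ⟨min m m', lt_min hm hm', fun t ht => ?_⟩
    rcases le_total N ‖t‖ with h1 | h1
    · exact (min_le_left _ _).trans (hN _ h1 t rfl)
    · exact (min_le_right _ _).trans (hm'A t ⟨by simpa using h1, ht⟩)

end IsExtConformalClosure

lemma ofReal_dist_le_hausdorffMeasure {X : Type*} [MetricSpace X] [MeasurableSpace X]
    [BorelSpace X] {J : Set X} (hJ : IsPreconnected J) {a b : X} (ha : a ∈ J) (hb : b ∈ J) :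
    ENNReal.ofReal (dist a b) ≤ μH[1] J := by
  have hsub : Icc (dist a a) (dist a b) ⊆ dist a '' J :=
    hJ.intermediate_value ha hb (continuous_const.dist continuous_id).continuousOn
  calc ENNReal.ofReal (dist a b) = μH[1] (Icc (dist a a) (dist a b)) := by
        rw [hausdorffMeasure_real, Real.volume_Icc, dist_self, sub_zero]
    _ ≤ μH[1] (dist a '' J) := measure_mono hsub
    _ ≤ μH[1] J := by
        simpa using (LipschitzWith.dist_right a).hausdorffMeasure_image_le zero_le_one J

lemma continuousOn_invFunOn {γ : ℂ → ℂ} {K : Set ℂ} (hK : IsCompact K) (hγ : ContinuousOn γ K)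
    (hinj : InjOn γ K) : ContinuousOn (Function.invFunOn γ K) (γ '' K) := by
  refine continuousOn_iff_isClosed.2 fun C hC => ⟨γ '' (K ∩ C), ?_, ?_⟩
  · exact ((hK.inter_right hC).image_of_continuousOn (hγ.mono inter_subset_left)).isClosed
  · ext z
    constructor
    · rintro ⟨hz, x, hx, rfl⟩
      refine ⟨⟨x, ⟨hx, ?_⟩, rfl⟩, x, hx, rfl⟩
      rwa [mem_preimage, hinj.leftInvOn_invFunOn hx] at hz
    · rintro ⟨⟨x, ⟨hx, hxC⟩, rfl⟩, -⟩
      refine ⟨?_, x, hx, rfl⟩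
      rwa [mem_preimage, hinj.leftInvOn_invFunOn hx]

lemma not_injOn_of_continuousOn_sphere {F : ℂ → ℝ} (hF : ContinuousOn F (sphere 0 1)) :
    ¬ InjOn F (sphere 0 1) := by
  intro hinj
  have hmem : ∀ y : ℝ, exp (y * I) ∈ sphere (0 : ℂ) 1 := fun y => by simp [norm_exp_ofReal_mul_I]
  have hmem' : ∀ y : ℝ, -exp (y * I) ∈ sphere (0 : ℂ) 1 := fun y => by
    simp [norm_exp_ofReal_mul_I]
  have hcont : Continuous fun y : ℝ => F (exp (y * I)) - F (-exp (y * I)) :=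
    (hF.comp_continuous (by fun_prop) hmem).sub (hF.comp_continuous (by fun_prop) hmem')
  obtain ⟨y, hy⟩ : ∃ y : ℝ, F (exp (y * I)) - F (-exp (y * I)) = 0 := by
    rcases le_total (F 1) (F (-1)) with h | h
    · exact mem_range_of_exists_le_of_exists_ge hcont ⟨0, by simpa using h⟩
        ⟨Real.pi, by simpa [exp_pi_mul_I] using h⟩
    · exact mem_range_of_exists_le_of_exists_ge hcont
        ⟨Real.pi, by simpa [exp_pi_mul_I] using h⟩ ⟨0, by simpa using h⟩
  have h1 := hinj (hmem y) (hmem' y) (sub_eq_zero.1 hy)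
  exact exp_ne_zero _ (self_eq_neg.1 h1)

lemma neg_div_mem_slitPlane {p q : ℂ} (hp : ‖p‖ = 1) (hq : ‖q‖ = 1) (hpq : p ≠ q) :
    -p / q ∈ slitPlane := by
  have hq0 : q ≠ 0 := norm_pos_iff.1 (by rw [hq]; exact one_pos)
  rw [mem_slitPlane_iff_arg]
  refine ⟨fun harg => hpq ?_, ?_⟩
  · have h1 : -p / q = -1 := by
      refine Complex.ext_norm_arg (by simp [hp, hq]) ?_
      rw [harg, arg_neg_one]
    rw [div_eq_iff hq0] at h1
    linear_combination -h1
  · exact div_ne_zero (neg_ne_zero.2 (norm_pos_iff.1 (by rw [hp]; exact one_pos))) hq0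

lemma eq_of_arg_neg_div_eq {p p' q : ℂ} (hp : ‖p‖ = 1) (hp' : ‖p'‖ = 1) (hq : ‖q‖ = 1)
    (h : arg (-p / q) = arg (-p' / q)) : p = p' := by
  have hq0 : q ≠ 0 := norm_pos_iff.1 (by rw [hq]; exact one_pos)
  have h1 : -p / q = -p' / q := Complex.ext_norm_arg (by simp [hp, hp', hq]) h
  exact neg_injective ((div_left_inj' hq0).1 h1)

lemma surjOn_sphere_of_injOn {g : ℂ → ℂ} (hg : ContinuousOn g (sphere 0 1))
    (hinj : InjOn g (sphere 0 1)) (hmaps : MapsTo g (sphere 0 1) (sphere 0 1)) :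
    SurjOn g (sphere 0 1) (sphere 0 1) := by
  intro q hq
  by_contra hne
  have hq1 : ‖q‖ = 1 := by simpa using hq
  have hg1 : ∀ x ∈ sphere (0 : ℂ) 1, ‖g x‖ = 1 := fun x hx => by simpa using hmaps hx
  refine not_injOn_of_continuousOn_sphere (F := fun x => arg (-g x / q)) ?_ ?_
  · exact fun x hx => (continuousAt_arg (neg_div_mem_slitPlane (hg1 x hx) hq1
      fun h => hne ⟨x, hx, h⟩)).comp_continuousWithinAt (f := fun x => -g x / q)
      ((hg x hx).neg.div_const q)
  · exact fun x hx x' hx' h => hinj hx hx'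
      (eq_of_arg_neg_div_eq (hg1 x hx) (hg1 x' hx') hq1 h)

lemma arg_neg_exp_div_exp {θ y : ℝ} (h₁ : y < θ) (h₂ : θ ≤ y + 2 * Real.pi) :
    arg (-exp (θ * I) / exp (y * I)) = θ - y - Real.pi := by
  have h : -exp (θ * I) / exp (y * I) = exp (((θ - y - Real.pi : ℝ) : ℂ) * I) := by
    push_cast
    rw [sub_mul, exp_sub, exp_pi_mul_I, sub_mul, exp_sub, div_neg, div_one, neg_div]
  rw [h, arg_exp_mul_I, toIocMod_eq_self]
  constructor <;> linarith

/-- A connected subset of the circle containing `exp (y₁ * I)` and `exp (y₂ * I)`, but not the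
point `exp (y * I)` between them, contains the point antipodal to `exp (y₂ * I)`. -/
lemma neg_exp_mem_of_isPreconnected {P : Set ℂ} (hP : IsPreconnected P)
    (hP1 : ∀ p ∈ P, ‖p‖ = 1) {y₁ y₂ y : ℝ} (hle : y₂ ≤ y₁ + Real.pi) (h₁ : y₁ < y) (h₂ : y < y₂)
    (hy₁ : exp (y₁ * I) ∈ P) (hy₂ : exp (y₂ * I) ∈ P) (hy : exp (y * I) ∉ P) :
    -exp (y₂ * I) ∈ P := by
  have hpi := Real.pi_pos
  have hcont : ContinuousOn (fun p => arg (-p / exp (y * I))) P := fun p hp =>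
    ((continuousAt_arg (neg_div_mem_slitPlane (hP1 p hp) (norm_exp_ofReal_mul_I y)
      fun h => hy (h ▸ hp))).comp (f := fun p => -p / exp (y * I))
      (by fun_prop (disch := exact exp_ne_zero _))).continuousWithinAt
  have e1 : arg (-exp (y₁ * I) / exp (y * I)) = y₁ + 2 * Real.pi - y - Real.pi := by
    rw [← arg_neg_exp_div_exp (by linarith) (by linarith)]
    congr 3
    push_cast
    rw [add_mul, exp_add, exp_two_pi_mul_I, mul_one]
  have e2 : arg (-exp (y₂ * I) / exp (y * I)) = y₂ - y - Real.pi :=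
    arg_neg_exp_div_exp h₂ (by linarith)
  have e3 : -exp (y₂ * I) = exp (((y₂ + Real.pi : ℝ) : ℂ) * I) := by
    push_cast
    rw [add_mul, exp_add, exp_pi_mul_I, mul_neg_one]
  have e4 : arg (-(-exp (y₂ * I)) / exp (y * I)) = y₂ + Real.pi - y - Real.pi := by
    rw [e3]; exact arg_neg_exp_div_exp (by linarith) (by linarith)
  obtain ⟨p, hp, hpe⟩ := hP.intermediate_value hy₂ hy₁ hcont
    (show arg (-(-exp (y₂ * I)) / exp (y * I)) ∈ Icc _ _ by
      simp only [e1, e2, e4]; constructor <;> linarith)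
  rwa [eq_of_arg_neg_div_eq (hP1 p hp) (by simp [norm_exp_ofReal_mul_I])
    (norm_exp_ofReal_mul_I y) hpe] at hp

lemma IsJordanCurve.isCompact {Γ : Set ℂ} (h : IsJordanCurve Γ) : IsCompact Γ := by
  obtain ⟨γ, hγ, -, rfl⟩ := h
  exact (isCompact_sphere 0 1).image_of_continuousOn hγ

lemma connectedComponentIn_subset_unboundedComponent {Γ : Set ℂ} {z : ℂ}
    (hz : z ∈ unboundedComponent Γ) : connectedComponentIn Γᶜ z ⊆ unboundedComponent Γ :=
  fun w hw => ⟨connectedComponentIn_subset _ _ hw, by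
    rw [← connectedComponentIn_eq hw]; exact hz.2⟩

lemma isOpen_unboundedComponent {Γ : Set ℂ} (hΓ : IsClosed Γ) :
    IsOpen (unboundedComponent Γ) := by
  refine isOpen_iff_mem_nhds.2 fun z hz => mem_of_superset ?_
    (connectedComponentIn_subset_unboundedComponent hz)
  exact hΓ.isOpen_compl.connectedComponentIn.mem_nhds (mem_connectedComponentIn hz.1)

lemma closure_unboundedComponent_subset {Γ : Set ℂ} (hΓ : IsClosed Γ) :
    closure (unboundedComponent Γ) ⊆ unboundedComponent Γ ∪ Γ := by
  intro z hz
  refine or_iff_not_imp_right.2 fun hzΓ => ?_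
  obtain ⟨w, hw, hwΩ⟩ := mem_closure_iff.1 hz _ hΓ.isOpen_compl.connectedComponentIn
    (mem_connectedComponentIn hzΓ)
  refine ⟨hzΓ, ?_⟩
  rw [connectedComponentIn_eq hw]
  exact hwΩ.2

namespace IsExtConformalClosure

variable {Γ : Set ℂ} {Φ : ℂ → ℂ} (h : IsExtConformalClosure (unboundedComponent Γ) Φ)
include h

lemma extInv_mem_curve (hΓ : IsClosed Γ) {t : ℂ} (ht : ‖t‖ = 1) :
    extInv (unboundedComponent Γ) Φ t ∈ Γ := by
  refine (closure_unboundedComponent_subset hΓ (h.extInv_mem ht.ge)).resolve_left fun hm => ?_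
  have h1 : 1 < ‖Φ (extInv (unboundedComponent Γ) Φ t)‖ := h.1.2.1.mapsTo hm
  rw [h.apply_extInv ht.ge, ht] at h1
  exact lt_irrefl _ h1

lemma exists_extInv_eq (hΓ : IsJordanCurve Γ) {z : ℂ} (hz : z ∈ Γ) :
    ∃ t : ℂ, ‖t‖ = 1 ∧ extInv (unboundedComponent Γ) Φ t = z := by
  have hcl := hΓ.isCompact.isClosed
  obtain ⟨γ, hγ, hinj, rfl⟩ := hΓ
  set Ψ := extInv (unboundedComponent (γ '' sphere (0 : ℂ) 1)) Φ with hΨ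
  have hsph : ∀ {t : ℂ}, t ∈ sphere (0 : ℂ) 1 → ‖t‖ = 1 := fun ht => by simpa using ht
  have hmem : MapsTo Ψ (sphere 0 1) (γ '' sphere 0 1) := fun t ht =>
    h.extInv_mem_curve hcl (hsph ht)
  have hsub : sphere (0 : ℂ) 1 ⊆ {t : ℂ | 1 ≤ ‖t‖} := fun t ht => (hsph ht).ge
  have hγΨ : ∀ t ∈ sphere (0 : ℂ) 1,
      γ (Function.invFunOn γ (sphere 0 1) (Ψ t)) = Ψ t := fun t ht =>
    Function.invFunOn_eq (hmem ht)
  obtain ⟨x, hx, rfl⟩ := hz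
  obtain ⟨t, ht, htx⟩ := surjOn_sphere_of_injOn
    (g := fun t => Function.invFunOn γ (sphere 0 1) (Ψ t))
    ((continuousOn_invFunOn (isCompact_sphere 0 1) hγ hinj).comp
      (h.continuousOn_extInv.mono hsub) hmem)
    (fun t ht t' ht' heq => h.injOn_extInv (hsub ht) (hsub ht') (by
      rw [← hΨ, ← hγΨ t ht, ← hγΨ t' ht']; exact congrArg γ heq))
    (fun t ht => Function.invFunOn_mem (hmem ht)) hx
  exact ⟨t, hsph ht, by rw [← hγΨ t ht, ← htx]⟩

/-- The boundary values of the inverse conformal map have bounded turning. -/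
lemma exists_hasBoundedTurning (hΓ : IsJordanCurve Γ) {Λ : ℝ} (hΛ : IsQuasismooth Γ Λ) :
    ∃ M, HasBoundedTurning (extInv (unboundedComponent Γ) Φ) M := by
  have hcl := hΓ.isCompact.isClosed
  set Ψ := extInv (unboundedComponent Γ) Φ with hΨ
  obtain ⟨hΛ1, hΛ⟩ := hΛ
  obtain ⟨B, hB, hgr⟩ := h.growth_extInv
  have hn : ∀ y : ℝ, ‖exp (y * I)‖ = 1 := norm_exp_ofReal_mul_I
  have hsub : sphere (0 : ℂ) 1 ⊆ {t : ℂ | 1 ≤ ‖t‖} := fun t ht => by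
    have : ‖t‖ = 1 := by simpa using ht
    exact this.ge
  have hΨc : ContinuousOn Ψ (sphere 0 1) := h.continuousOn_extInv.mono hsub
  obtain ⟨δ, hδ, hδle⟩ : ∃ δ > 0, ∀ t : ℂ, ‖t‖ = 1 → δ ≤ ‖Ψ t - Ψ (-t)‖ := by
    have hneg : MapsTo (fun t : ℂ => -t) (sphere 0 1) (sphere 0 1) := fun t ht => by simpa using ht
    obtain ⟨t₀, ht₀, hmin⟩ := (isCompact_sphere (0 : ℂ) 1).exists_isMinOn ⟨1, by simp⟩
      (hΨc.sub (hΨc.comp continuousOn_neg hneg)).norm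
    refine ⟨_, norm_pos_iff.2 (sub_ne_zero.2 fun heq => ?_), fun t ht =>
      hmin (show t ∈ sphere (0 : ℂ) 1 by simpa using ht)⟩
    have h1 := h.injOn_extInv (hsub ht₀) (hsub (hneg ht₀)) heq
    rw [self_eq_neg.1 h1] at ht₀
    simp at ht₀
  refine ⟨2 * Λ * (1 + 2 * B / δ), ?_, fun y₁ y₂ y hlt hle hy => ?_⟩
  · have : 0 ≤ 2 * B / δ := by positivity
    nlinarith
  set d := ‖Ψ (exp (y₁ * I)) - Ψ (exp (y₂ * I))‖ with hd
  have hd0 : 0 < d := by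
    refine norm_pos_iff.2 (sub_ne_zero.2 fun heq => ?_)
    have h1 := h.injOn_extInv (hn y₁).ge (hn y₂).ge heq
    have h2 := eq_of_exp_eq_of_abs_im_lt h1 (by
      simp only [mul_im, ofReal_re, I_im, ofReal_im, I_re, mul_one, mul_zero, add_zero]
      rw [abs_lt]; constructor <;> linarith [Real.pi_pos])
    have h3 : y₁ = y₂ := by simpa using h2
    exact hlt.ne h3
  obtain ⟨J, ⟨⟨hJΓ, -, hJ⟩, hJ₁, hJ₂⟩, hJlen⟩ : ∃ J : Set ℂ, (IsSubarc Γ J ∧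
      Ψ (exp (y₁ * I)) ∈ J ∧ Ψ (exp (y₂ * I)) ∈ J) ∧ μH[1] J < ENNReal.ofReal (2 * Λ * d) := by
    have h1 := hΛ _ (h.extInv_mem_curve hcl (hn y₁)) _ (h.extInv_mem_curve hcl (hn y₂))
    rw [dist_eq_norm, ← hΨ, ← hd] at h1
    replace h1 := h1.trans_lt (c := ENNReal.ofReal (2 * Λ * d))
      ((ENNReal.ofReal_lt_ofReal_iff (by positivity)).2 (by nlinarith))
    simpa only [shorterArcLength, iInf_lt_iff, exists_prop] using h1
  have hdist : ∀ a ∈ J, ∀ b ∈ J, ‖a - b‖ ≤ 2 * Λ * d := fun a ha b hb => by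
    have h1 := (ofReal_dist_le_hausdorffMeasure hJ ha hb).trans hJlen.le
    rw [ENNReal.ofReal_le_ofReal_iff (by positivity), dist_eq_norm] at h1
    exact h1
  have hJcl : ∀ z ∈ J, ‖Φ z‖ = 1 ∧ Ψ (Φ z) = z ∧ z ∈ closure (unboundedComponent Γ) := by
    intro z hz
    obtain ⟨t, ht, rfl⟩ := h.exists_extInv_eq hΓ (hJΓ hz)
    rw [h.apply_extInv ht.ge]
    exact ⟨ht, rfl, h.extInv_mem ht.ge⟩
  have hfact : 2 * Λ * d ≤ 2 * Λ * (1 + 2 * B / δ) * d := by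
    have : 0 ≤ 2 * Λ * d * (2 * B / δ) := by positivity
    linarith
  have hmemP : ∀ y : ℝ, Ψ (exp (y * I)) ∈ J → exp (y * I) ∈ Φ '' J := fun y hy =>
    ⟨_, hy, h.apply_extInv (hn y).ge⟩
  have hPmem : ∀ t ∈ Φ '' J, Ψ t ∈ J := by
    rintro _ ⟨z, hz, rfl⟩
    rwa [(hJcl z hz).2.1]
  by_cases hyP : exp (y * I) ∈ Φ '' J
  · exact (hdist _ (hPmem _ hyP) _ hJ₁).trans hfact
  have hy₁ : y₁ < y := hy.1.lt_of_ne fun heq => hyP (heq ▸ hmemP _ hJ₁)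
  have hy₂ : y < y₂ := hy.2.lt_of_ne fun heq => hyP (heq ▸ hmemP _ hJ₂)
  have hneg := neg_exp_mem_of_isPreconnected
    (hJ.image Φ (h.2.1.mono fun z hz => (hJcl z hz).2.2))
    (by rintro _ ⟨z, hz, rfl⟩; exact (hJcl z hz).1) hle hy₁ hy₂ (hmemP _ hJ₁) (hmemP _ hJ₂) hyP
  have h1 : δ ≤ 2 * Λ * d := (hδle _ (hn y₂)).trans (hdist _ hJ₂ _ (hPmem _ hneg))
  have h2 : ∀ y : ℝ, ‖Ψ (exp (y * I))‖ ≤ B := fun y => by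
    simpa [hn y] using hgr _ (hn y).ge
  calc ‖Ψ (exp (y * I)) - Ψ (exp (y₁ * I))‖ ≤ 2 * B := by
        linarith [norm_sub_le (Ψ (exp (y * I))) (Ψ (exp (y₁ * I))), h2 y, h2 y₁]
    _ = δ * (2 * B / δ) := by field_simp
    _ ≤ 2 * Λ * d * (2 * B / δ) := by gcongr
    _ ≤ 2 * Λ * (1 + 2 * B / δ) * d := by nlinarith

end IsExtConformalClosure

/-- Lemma 3.1 (ii): there is `α = α(Γ) ≥ 1` such that for every `c > 0`
there is `C = C(Γ,c) > 0` with: for `z₁,z₂,z₃` in the closure of `Ω`, `z₁ ≠ z₂`,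
`t_j = Φ(z_j)`, if `|z₁-z₂| ≤ c|z₁-z₃|` then
`(|t₁-t₃|/|t₁-t₂|)^{1/α} ≤ C |z₁-z₃|/|z₁-z₂|` and
`|z₁-z₃|/|z₁-z₂| ≤ C (|t₁-t₃|/|t₁-t₂|)^{α}`. -/
theorem conformal_distortion_power
    (Γ : Set ℂ) (Λ : ℝ) (hΓJ : IsJordanCurve Γ) (hΓq : IsQuasismooth Γ Λ)
    (Φ : ℂ → ℂ) (hΦ : IsExtConformalClosure (unboundedComponent Γ) Φ) :
    ∃ α : ℝ, 1 ≤ α ∧ ∀ c > (0:ℝ), ∃ C > (0:ℝ), ∀ z₁ z₂ z₃ : ℂ,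
      z₁ ∈ closure (unboundedComponent Γ) → z₂ ∈ closure (unboundedComponent Γ) →
      z₃ ∈ closure (unboundedComponent Γ) → z₁ ≠ z₂ →
      dist z₁ z₂ ≤ c * dist z₁ z₃ →
      (dist (Φ z₁) (Φ z₃) / dist (Φ z₁) (Φ z₂)) ^ (1/α) ≤
          C * (dist z₁ z₃ / dist z₁ z₂) ∧
        dist z₁ z₃ / dist z₁ z₂ ≤
          C * (dist (Φ z₁) (Φ z₃) / dist (Φ z₁) (Φ z₂)) ^ α := by
  have hΩ : IsOpen (unboundedComponent Γ) :=
    isOpen_unboundedComponent hΓJ.isCompact.isClosed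
  obtain ⟨M, hM⟩ := hΦ.exists_hasBoundedTurning hΓJ hΓq
  obtain ⟨H, hH, hqs⟩ :=
    (hΦ.isExtParam_extInv hΩ).exists_weak_quasisymmetric hM (c := 3) (by norm_num)
  exact exists_power_distortion (fun _ => hΦ.one_le_norm) (fun _ => hΦ.extInv_apply)
    (fun _ => hΦ.apply_extInv) hΦ.meetsCircles (meetsCircles_norm_ge one_pos) hH
    fun t₁ h₁ t₂ h₂ t₃ h₃ => hqs t₁ t₂ t₃ h₁ h₂ h₃
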